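/- Let H be either H1 or H2. For all integers k ≥ 1 and r with 0 ≤ r ≤ k such that k−r and r are both odd, GR_k((k−r)K3, rH) = 8·5^((k−r−1)/2)·17^((r−1)/2) + 1. -/

import Mathlib

open SimpleGraph

/-- A rainbow triangle in an edge-coloring of a complete graph: three distinct
vertices whose three pairwise edges receive three pairwise distinct colors. -/
def HasRainbowTriangle {n k : ℕ} (c : Fin n → Fin n → Fin k) : Prop :=
  ∃ u v w : Fin n, u ≠ v ∧ u ≠ w ∧ v ≠ w ∧
    c u v ≠ c u w ∧ c u v ≠ c v w ∧ c u w ≠ c v w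

/-- A Gallai `k`-coloring of `K_n`: a symmetric edge-coloring with no rainbow triangle. -/
def IsGallaiColoring {n k : ℕ} (c : Fin n → Fin n → Fin k) : Prop :=
  (∀ u v, c u v = c v u) ∧ ¬ HasRainbowTriangle c

/-- A monochromatic copy of the graph `F` in color `i`: an injection of the vertices
of `F` into the vertices of `K_n` mapping every edge of `F` to an edge colored `i`. -/
def HasMonoCopy {V : Type} (F : SimpleGraph V) {n k : ℕ}
    (c : Fin n → Fin n → Fin k) (i : Fin k) : Prop :=
  ∃ f : V → Fin n, Function.Injective f ∧ ∀ a b, F.Adj a b → c (f a) (f b) = i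

/-- The Gallai-Ramsey number `GR(F₁, …, F_k)`: the least `n` such that every Gallai
`k`-coloring of `K_n` contains, for some color `i`, a monochromatic copy of `Fᵢ`
in color `i`. -/
noncomputable def GR (k : ℕ) (F : Fin k → Σ V : Type, SimpleGraph V) : ℕ :=
  sInf {n : ℕ | ∀ c : Fin n → Fin n → Fin k, IsGallaiColoring c →
    ∃ i : Fin k, HasMonoCopy (F i).2 c i}

/-- The triangle `K₃`. -/
def GK3 : SimpleGraph (Fin 3) := ⊤

/-- The path `P₃` on three vertices (edges 0–1 and 1–2). -/
def GP3 : SimpleGraph (Fin 3) := SimpleGraph.fromRel (fun a _ => a = 1)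

/-- `H₁`: a `K₄` on `{0,1,2,3}` together with the extra vertex `4` adjacent to
exactly the vertex `3`. -/
def GH1 : SimpleGraph (Fin 5) :=
  SimpleGraph.fromRel (fun a b => (a ≠ 4 ∧ b ≠ 4) ∨ (a = 3 ∧ b = 4))

/-- `H₂`: `K₅` minus the two edges 0–1 and 1–2 of a path on three vertices. -/
def GH2 : SimpleGraph (Fin 5) :=
  (⊤ : SimpleGraph (Fin 5)) \
    SimpleGraph.fromRel (fun a b => (a = 0 ∧ b = 1) ∨ (a = 1 ∧ b = 2))

/-- `H₃`: `K₅` minus the edge 0–1. -/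
def GH3 : SimpleGraph (Fin 5) :=
  (⊤ : SimpleGraph (Fin 5)) \ SimpleGraph.fromRel (fun a b => a = 0 ∧ b = 1)
/-- The family of graphs for `GR_k((k-r)K₃, rH)`: the graph `H` in each of the first
`r` colors and the triangle `K₃` in each of the remaining `k - r` colors. -/
def mixKH (k r : ℕ) (H : SimpleGraph (Fin 5)) : Fin k → Σ V : Type, SimpleGraph V :=
  fun i => if (i : ℕ) < r then ⟨Fin 5, H⟩ else ⟨Fin 3, GK3⟩


set_option linter.unusedSectionVars false

namespace GRam

def E {V κ : Type} (c : V → V → κ) (i : κ) (x y : V) : Prop := x ≠ y ∧ c x y = i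

/-- no edge of color `i` in `S` -/
def NE {V κ : Type} (c : V → V → κ) (S : Finset V) (i : κ) : Prop :=
  ∀ x ∈ S, ∀ y ∈ S, E c i x y → False
/-- no triangle -/
def NT {V κ : Type} (c : V → V → κ) (S : Finset V) (i : κ) : Prop :=
  ∀ x ∈ S, ∀ y ∈ S, ∀ z ∈ S, E c i x y → E c i x z → E c i y z → False
/-- no triangle with a pendant edge -/
def NP {V κ : Type} (c : V → V → κ) (S : Finset V) (i : κ) : Prop :=
  ∀ a ∈ S, ∀ p ∈ S, ∀ q ∈ S, ∀ w ∈ S, E c i a p → E c i a q → E c i p q → E c i a w →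
    w ≠ p → w ≠ q → False
/-- no `K₄` -/
def NK {V κ : Type} (c : V → V → κ) (S : Finset V) (i : κ) : Prop :=
  ∀ a ∈ S, ∀ b ∈ S, ∀ p ∈ S, ∀ q ∈ S, E c i a b → E c i a p → E c i a q → E c i b p →
    E c i b q → E c i p q → False
/-- no `H₂` -/
def NH {V κ : Type} (c : V → V → κ) (S : Finset V) (i : κ) : Prop :=
  ∀ a ∈ S, ∀ b ∈ S, ∀ p ∈ S, ∀ q ∈ S, ∀ w ∈ S, E c i a b → E c i a p → E c i a q → E c i b p →
    E c i b q → E c i p q → E c i a w → E c i b w → w ≠ p → w ≠ q → False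

section ramsey
variable {V κ : Type} [DecidableEq V] [DecidableEq κ] {c : V → V → κ}

theorem E.symm' (hs : ∀ x y, c x y = c y x) {i : κ} {x y : V} (h : E c i x y) : E c i y x :=
  ⟨h.1.symm, (hs y x).trans h.2⟩

theorem NT.mono {S T : Finset V} (h : S ⊆ T) {i : κ} (hh : NT c T i) : NT c S i :=
  fun x hx y hy z hz => hh x (h hx) y (h hy) z (h hz)
theorem NE.mono {S T : Finset V} (h : S ⊆ T) {i : κ} (hh : NE c T i) : NE c S i :=
  fun x hx y hy => hh x (h hx) y (h hy)
theorem NP.mono {S T : Finset V} (h : S ⊆ T) {i : κ} (hh : NP c T i) : NP c S i :=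
  fun x hx y hy z hz w hw => hh x (h hx) y (h hy) z (h hz) w (h hw)
theorem NK.mono {S T : Finset V} (h : S ⊆ T) {i : κ} (hh : NK c T i) : NK c S i :=
  fun x hx y hy z hz w hw => hh x (h hx) y (h hy) z (h hz) w (h hw)
theorem NH.mono {S T : Finset V} (h : S ⊆ T) {i : κ} (hh : NH c T i) : NH c S i :=
  fun x hx y hy z hz w hw v hv => hh x (h hx) y (h hy) z (h hz) w (h hw) v (h hv)

theorem three_of {s : Finset V} (h : 3 ≤ s.card) :
    ∃ a ∈ s, ∃ b ∈ s, ∃ d ∈ s, a ≠ b ∧ a ≠ d ∧ b ≠ d := by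
  obtain ⟨a, b, d, h⟩ := Finset.two_lt_card_iff.1 h
  exact ⟨a, h.1, b, h.2.1, d, h.2.2.1, h.2.2.2⟩

theorem four_of {s : Finset V} (h : 4 ≤ s.card) :
    ∃ a ∈ s, ∃ b ∈ s, ∃ d ∈ s, ∃ e ∈ s, a ≠ b ∧ a ≠ d ∧ b ≠ d ∧ a ≠ e ∧ b ≠ e ∧ d ≠ e := by
  obtain ⟨e, he⟩ : s.Nonempty := Finset.card_pos.1 (by omega)
  obtain ⟨a, ha, b, hb, d, hd, h1, h2, h3⟩ := three_of (s := s.erase e)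
    (by rw [Finset.card_erase_of_mem he]; omega)
  simp only [Finset.mem_erase] at ha hb hd
  exact ⟨a, ha.2, b, hb.2, d, hd.2, e, he, h1, h2, h3, ha.1, hb.1, hd.1⟩

/-- neighbourhood in color `i` -/
def nb (c : V → V → κ) (S : Finset V) (i : κ) (v : V) : Finset V :=
  S.filter (fun y => v ≠ y ∧ c v y = i)

theorem mem_nb {S : Finset V} {i : κ} {v y : V} : y ∈ nb c S i v ↔ y ∈ S ∧ E c i v y := by
  simp [nb, E]

theorem nb_sub {S : Finset V} {i : κ} {v : V} : nb c S i v ⊆ S := Finset.filter_subset _ _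

def Two (c : V → V → κ) (S : Finset V) (i j : κ) : Prop :=
  ∀ x ∈ S, ∀ y ∈ S, x ≠ y → E c i x y ∨ E c j x y

theorem Two.mono {S T : Finset V} (h : S ⊆ T) {i j : κ} (hh : Two c T i j) : Two c S i j :=
  fun x hx y hy => hh x (h hx) y (h hy)
theorem Two.swap {T : Finset V} {i j : κ} (hh : Two c T i j) : Two c T j i :=
  fun x hx y hy hxy => (hh x hx y hy hxy).symm

theorem nb_card {S : Finset V} {i j : κ} (h2 : Two c S i j) {v : V} (hv : v ∈ S) :
    S.card ≤ (nb c S i v).card + (nb c S j v).card + 1 := by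
  have : S ⊆ insert v (nb c S i v ∪ nb c S j v) := by
    intro y hy
    by_cases h : v = y
    · simp [h]
    · rcases h2 v hv y hy h with h | h <;> simp [mem_nb, hy, h]
  refine (Finset.card_le_card this).trans ((Finset.card_insert_le _ _).trans ?_)
  have := Finset.card_union_le (nb c S i v) (nb c S j v)
  omega

theorem nb_card' {S : Finset V} {i j : κ} (hij : i ≠ j) {v : V} (hv : v ∈ S) :
    (nb c S i v).card + (nb c S j v).card + 1 ≤ S.card := by
  have hd : Disjoint (nb c S i v) (nb c S j v) := by
    rw [Finset.disjoint_left]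
    intro y h1 h2
    exact hij ((mem_nb.1 h1).2.2.symm.trans (mem_nb.1 h2).2.2)
  have hn : v ∉ nb c S i v ∪ nb c S j v := by simp [mem_nb, E]
  rw [← Finset.card_union_of_disjoint hd, ← Finset.card_insert_of_notMem hn]
  apply Finset.card_le_card
  intro y hy
  simp only [Finset.mem_insert, Finset.mem_union, mem_nb] at hy
  rcases hy with rfl | h | h
  · exact hv
  · exact h.1
  · exact h.1

theorem nb_NE {S : Finset V} {i : κ} (h : NT c S i) {v : V} (hv : v ∈ S) :
    NE c (nb c S i v) i := by
  intro x hx y hy hxy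
  rw [mem_nb] at hx hy
  exact h v hv x hx.1 y hy.1 hx.2 hy.2 hxy

theorem other {S : Finset V} {i j : κ} (h2 : Two c S i j) (h : NE c S i) {x y : V}
    (hx : x ∈ S) (hy : y ∈ S) (hxy : x ≠ y) : E c j x y :=
  (h2 x hx y hy hxy).resolve_left (fun hh => h x hx y hy hh)

theorem R33 {S : Finset V} {i j : κ} (h2 : Two c S i j) (hi : NT c S i) (hj : NT c S j) :
    S.card ≤ 5 := by
  by_contra hc
  obtain ⟨v, hv⟩ : S.Nonempty := Finset.card_pos.1 (by omega)
  have h1 := nb_card h2 hv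
  have key : ∀ i j : κ, Two c S i j → NT c S i → NT c S j → (nb c S i v).card ≤ 2 := by
    intro i j h2 hi hj
    by_contra h3
    obtain ⟨a, ha, b, hb, d, hd, hab, had, hbd⟩ := three_of (s := nb c S i v) (by omega)
    have hn := nb_NE hi hv
    have h2' := h2.mono (nb_sub (c := c) (i := i) (v := v))
    exact hj a (nb_sub ha) b (nb_sub hb) d (nb_sub hd) (other h2' hn ha hb hab)
      (other h2' hn ha hd had) (other h2' hn hb hd hbd)
  have := key i j h2 hi hj
  have := key j i h2.swap hj hi
  omega

theorem R34 (hs : ∀ x y, c x y = c y x) {S : Finset V} {i j : κ} (hij : i ≠ j)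
    (h2 : Two c S i j) (hi : NT c S i) (hj : NK c S j) : S.card ≤ 8 := by
  by_contra hc
  obtain ⟨T, hT, hTc⟩ := Finset.exists_subset_card_eq (show 9 ≤ S.card by omega)
  replace h2 := h2.mono hT
  replace hi := hi.mono hT
  replace hj := hj.mono hT
  clear hc hT
  have d1 : ∀ v ∈ T, (nb c T i v).card ≤ 3 := by
    intro v hv
    by_contra h3
    obtain ⟨a, ha, b, hb, d, hd, e, he, h⟩ := four_of (s := nb c T i v) (by omega)
    have hn := nb_NE hi hv
    have h2' := h2.mono (nb_sub (c := c) (i := i) (v := v))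
    exact hj a (nb_sub ha) b (nb_sub hb) d (nb_sub hd) e (nb_sub he) (other h2' hn ha hb h.1)
      (other h2' hn ha hd h.2.1) (other h2' hn ha he h.2.2.2.1) (other h2' hn hb hd h.2.2.1)
      (other h2' hn hb he h.2.2.2.2.1) (other h2' hn hd he h.2.2.2.2.2)
  have d2 : ∀ v ∈ T, (nb c T j v).card ≤ 5 := by
    intro v hv
    refine R33 (h2.mono nb_sub) (hi.mono nb_sub) ?_
    intro x hx y hy z hz hxy hxz hyz
    rw [mem_nb] at hx hy hz
    exact hj v hv x hx.1 y hy.1 z hz.1 hx.2 hy.2 hz.2 hxy hxz hyz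
  have d3 : ∀ v ∈ T, (nb c T i v).card = 3 := by
    intro v hv
    have := nb_card h2 hv
    have := d1 v hv
    have := d2 v hv
    omega
  let G : SimpleGraph T := { Adj := fun x y => E c i x.1 y.1, symm := ⟨fun x y h => h.symm' hs⟩, loopless := ⟨fun x h => h.1 rfl⟩ }
  classical
  have hdeg : ∀ v : T, G.degree v = 3 := by
    intro v
    rw [← d3 v.1 v.2, ← SimpleGraph.card_neighborFinset_eq_degree]
    refine Finset.card_bij (fun a _ => a.1) ?_ ?_ ?_
    · intro a ha
      rw [SimpleGraph.mem_neighborFinset] at ha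
      exact mem_nb.2 ⟨a.2, ha⟩
    · intro a _ b _ h
      exact Subtype.ext h
    · intro b hb
      rw [mem_nb] at hb
      exact ⟨⟨b, hb.1⟩, by rw [SimpleGraph.mem_neighborFinset]; exact hb.2, rfl⟩
  have hsum := G.sum_degrees_eq_twice_card_edges
  simp only [hdeg, Finset.sum_const, Finset.card_univ, Fintype.card_coe, hTc] at hsum
  simp only [smul_eq_mul] at hsum
  omega

theorem prop1 {A B P Q A' B' P' Q' : Prop} (h1 : A ∨ A') (h2 : B ∨ B') (h3 : P ∨ P')
    (h4 : Q ∨ Q') (n1 : A' → B' → False) (n2 : A' → P' → False) (n3 : A' → Q' → False)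
    (n4 : B' → P' → False) (n5 : B' → Q' → False) (n6 : P' → Q' → False) :
    (A ∧ B ∧ P) ∨ (A ∧ B ∧ Q) ∨ (A ∧ P ∧ Q) ∨ (B ∧ P ∧ Q) := by
  grind

theorem prop2 {A B P Q A' B' P' Q' : Prop}
    (h : (A ∧ B ∧ P) ∨ (A ∧ B ∧ Q) ∨ (A ∧ P ∧ Q) ∨ (B ∧ P ∧ Q))
    (h' : (A' ∧ B' ∧ P') ∨ (A' ∧ B' ∧ Q') ∨ (A' ∧ P' ∧ Q') ∨ (B' ∧ P' ∧ Q'))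
    (n1 : A → A' → False) (n2 : B → B' → False) (n3 : P → P' → False)
    (n4 : Q → Q' → False) : False := by
  grind

theorem R3H (hs : ∀ x y, c x y = c y x) {S : Finset V} {i j : κ} (hij : i ≠ j)
    (h2 : Two c S i j) (hi : NT c S i) (hj : NH c S j) : S.card ≤ 8 := by
  by_contra hc
  have hK : ¬ NK c S j := fun h => hc (R34 hs hij h2 hi h)
  simp only [NK] at hK
  push Not at hK
  obtain ⟨a, ha, b, hb, p, hp, q, hq, h1, h2', h3, h4, h5, h6, -⟩ := hK
  have hQ : ({a, b, p, q} : Finset V).card ≤ 4 := Finset.card_le_four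
  have hcard : 5 ≤ (S \ {a, b, p, q}).card := by
    have := Finset.le_card_sdiff ({a, b, p, q} : Finset V) S
    omega
  obtain ⟨f, hf⟩ : (S \ {a, b, p, q}).Nonempty := Finset.card_pos.1 (by omega)
  obtain ⟨x, hx, y, hy, z, hz, w, hw, hne⟩ := four_of (s := (S \ {a, b, p, q}).erase f)
    (by rw [Finset.card_erase_of_mem hf]; omega)
  -- each outside vertex has at most one j-neighbour
  have s1 := h1.symm' hs
  have s2 := h2'.symm' hs
  have s3 := h3.symm' hs
  have s4 := h4.symm' hs
  have s5 := h5.symm' hs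
  have s6 := h6.symm' hs
  have key : ∀ w ∈ S \ {a, b, p, q}, ∀ w' ∈ S \ {a, b, p, q}, w ≠ w' → E c j w w' := by
    have half : ∀ w ∈ S \ {a, b, p, q}, w ∈ S ∧
        ((E c i a w ∧ E c i b w ∧ E c i p w) ∨ (E c i a w ∧ E c i b w ∧ E c i q w) ∨
        (E c i a w ∧ E c i p w ∧ E c i q w) ∨ (E c i b w ∧ E c i p w ∧ E c i q w)) := by
      intro w hw
      simp only [Finset.mem_sdiff, Finset.mem_insert, Finset.mem_singleton, not_or] at hw
      obtain ⟨hwS, wa, wb, wp, wq⟩ := hw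
      refine ⟨hwS, ?_⟩
      have ea := h2 a ha w hwS (Ne.symm wa)
      have eb := h2 b hb w hwS (Ne.symm wb)
      have ep := h2 p hp w hwS (Ne.symm wp)
      have eq := h2 q hq w hwS (Ne.symm wq)
      have n1 := fun h h' => hj a ha b hb p hp q hq w hwS h1 h2' h3 h4 h5 h6 h h' wp wq
      have n2 := fun h h' => hj a ha p hp b hb q hq w hwS h2' h1 h3 s4 h6 h5 h h' wb wq
      have n3 := fun h h' => hj a ha q hq b hb p hp w hwS h3 h1 h2' s5 s6 h4 h h' wb wp
      have n4 := fun h h' => hj b hb p hp a ha q hq w hwS h4 s1 h5 s2 h6 h3 h h' wa wq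
      have n5 := fun h h' => hj b hb q hq a ha p hp w hwS h5 s1 h4 s3 s6 h2' h h' wa wp
      have n6 := fun h h' => hj p hp q hq a ha b hb w hwS h6 s2 s4 s3 s5 h1 h h' wa wb
      exact prop1 ea eb ep eq n1 n2 n3 n4 n5 n6
    intro w hw w' hw' hne
    obtain ⟨hwS, hw⟩ := half w hw
    obtain ⟨hwS', hw'⟩ := half w' hw'
    refine (h2 w hwS w' hwS' hne).resolve_left ?_
    intro hww
    have na := fun h h' => hi a ha w hwS w' hwS' h h' hww
    have nb := fun h h' => hi b hb w hwS w' hwS' h h' hww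
    have np := fun h h' => hi p hp w hwS w' hwS' h h' hww
    have nq := fun h h' => hi q hq w hwS w' hwS' h h' hww
    exact prop2 hw hw' na nb np nq
  simp only [Finset.mem_erase] at hx hy hz hw
  have sub : ∀ u ∈ S \ {a, b, p, q}, u ∈ S := fun u hu => (Finset.mem_sdiff.1 hu).1
  obtain ⟨n1, n2, n3, n4, n5, n6⟩ := hne
  exact hj x (sub _ hx.2) y (sub _ hy.2) z (sub _ hz.2) w (sub _ hw.2) f (sub _ hf)
    (key _ hx.2 _ hy.2 n1) (key _ hx.2 _ hz.2 n2) (key _ hx.2 _ hw.2 n4)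
    (key _ hy.2 _ hz.2 n3) (key _ hy.2 _ hw.2 n5) (key _ hz.2 _ hw.2 n6)
    (key _ hx.2 _ hf hx.1) (key _ hy.2 _ hf hy.1) (Ne.symm hz.1) (Ne.symm hw.1)

end ramsey
section ramsey2
variable {V κ : Type} [DecidableEq V] [DecidableEq κ] {c : V → V → κ}

theorem prop3 {X Y Z X' Y' Z' : Prop} (h1 : X ∨ X') (h2 : Y ∨ Y') (h3 : Z ∨ Z')
    (n1 : X → Y → False) (n2 : X → Z → False) (n3 : Y → Z → False) :
    (X' ∧ Y') ∨ (X' ∧ Z') ∨ (Y' ∧ Z') := by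
  grind

theorem tripair (hs : ∀ x y, c x y = c y x) {S : Finset V} {i j : κ} (h2 : Two c S i j)
    (hi : NH c S i) {v x y z w : V} (hv : v ∈ S) (hx : x ∈ S) (hy : y ∈ S) (hz : z ∈ S)
    (hw : w ∈ S) (vx : E c i v x) (vy : E c i v y) (vz : E c i v z) (xy : E c i x y)
    (xz : E c i x z) (yz : E c i y z) (wv : w ≠ v) (wx : w ≠ x) (wy : w ≠ y) (wz : w ≠ z) :
    ∃ p ∈ ({x, y, z} : Finset V), ∃ p' ∈ ({x, y, z} : Finset V), p ≠ p' ∧ E c j w p ∧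
      E c j w p' := by
  have e1 := h2 w hw x hx wx
  have e2 := h2 w hw y hy wy
  have e3 := h2 w hw z hz wz
  have n1 : E c i w x → E c i w y → False := fun h h' =>
    hi x hx y hy v hv z hz w hw xy (vx.symm' hs) xz (vy.symm' hs) yz vz (h.symm' hs)
      (h'.symm' hs) wv wz
  have n2 : E c i w x → E c i w z → False := fun h h' =>
    hi x hx z hz v hv y hy w hw xz (vx.symm' hs) xy (vz.symm' hs) (yz.symm' hs) vy (h.symm' hs)
      (h'.symm' hs) wv wy
  have n3 : E c i w y → E c i w z → False := fun h h' =>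
    hi y hy z hz v hv x hx w hw yz (vy.symm' hs) (xy.symm' hs) (vz.symm' hs) (xz.symm' hs) vx
      (h.symm' hs) (h'.symm' hs) wv wx
  rcases prop3 e1 e2 e3 n1 n2 n3 with h | h | h
  · exact ⟨x, by simp, y, by simp, xy.1, h⟩
  · exact ⟨x, by simp, z, by simp, xz.1, h⟩
  · exact ⟨y, by simp, z, by simp, yz.1, h⟩

/-- in a set without `K₃⁺` the vertices of a triangle have no further neighbours -/
theorem tri_out (hs : ∀ x y, c x y = c y x) {N : Finset V} {i j : κ} (h2 : Two c N i j)
    (hN : NP c N i) {x y z : V} (hx : x ∈ N) (hy : y ∈ N) (hz : z ∈ N)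
    (xy : E c i x y) (xz : E c i x z) (yz : E c i y z) :
    ∀ p ∈ ({x, y, z} : Finset V), ∀ w ∈ N \ {x, y, z}, E c j p w := by
  intro p hp w hw
  simp only [Finset.mem_sdiff, Finset.mem_insert, Finset.mem_singleton, not_or] at hp hw
  obtain ⟨hwN, wx, wy, wz⟩ := hw
  rcases hp with rfl | rfl | rfl
  · exact (h2 p hx w hwN (Ne.symm wx)).resolve_left
      (fun h => hN p hx y hy z hz w hwN xy xz yz h wy wz)
  · exact (h2 p hy w hwN (Ne.symm wy)).resolve_left
      (fun h => hN p hy x hx z hz w hwN (xy.symm' hs) yz xz h wx wz)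
  · exact (h2 p hz w hwN (Ne.symm wz)).resolve_left
      (fun h => hN p hz x hx y hy w hwN (xz.symm' hs) (yz.symm' hs) xy h wx wy)

theorem exists_tri {N : Finset V} {i : κ} (h : ¬ NT c N i) :
    ∃ x ∈ N, ∃ y ∈ N, ∃ z ∈ N, E c i x y ∧ E c i x z ∧ E c i y z := by
  simp only [NT] at h
  push Not at h
  obtain ⟨x, hx, y, hy, z, hz, h1, h2, h3, -⟩ := h
  exact ⟨x, hx, y, hy, z, hz, h1, h2, h3⟩

theorem tri_pair_sdiff (N : Finset V) (x y z : V) : N.card ≤ (N \ {x, y, z}).card + 3 := by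
  have := Finset.le_card_sdiff ({x, y, z} : Finset V) N
  have : ({x, y, z} : Finset V).card ≤ 3 := Finset.card_le_three
  omega

theorem nb_NP {S : Finset V} {i : κ} (h : NH c S i) {v : V} (hv : v ∈ S) :
    NP c (nb c S i v) i := by
  intro a ha p hp q hq w hw h1 h2 h3 h4 h5 h6
  rw [mem_nb] at ha hp hq hw
  exact h v hv a ha.1 p hp.1 q hq.1 w hw.1 ha.2 hp.2 hq.2 h1 h2 h3 hw.2 h4 h5 h6

theorem RHH_half (hs : ∀ x y, c x y = c y x) {S : Finset V} {i j : κ} (hij : i ≠ j)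
    (h2 : Two c S i j) (hi : NH c S i) (hj : NH c S j) {v : V} (hv : v ∈ S)
    (hS : 18 ≤ S.card) (hd : 9 ≤ (nb c S i v).card) : False := by
  have hNS : nb c S i v ⊆ S := nb_sub
  have hNv : ∀ y ∈ nb c S i v, E c i v y := fun y hy => (mem_nb.1 hy).2
  have hNP := nb_NP hi hv
  set N := nb c S i v with hN
  have hN2 := h2.mono hNS
  obtain ⟨x, hx, y, hy, z, hz, xy, xz, yz⟩ := exists_tri (c := c) (N := N) (i := i)
    (fun h => by have := R3H hs hij hN2 h (hj.mono hNS); omega)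
  have o1 := tri_out hs hN2 hNP hx hy hz xy xz yz
  have c1 := tri_pair_sdiff N x y z
  have hWN : N \ {x, y, z} ⊆ N := Finset.sdiff_subset
  have hWn : ∀ u ∈ N \ {x, y, z}, u ≠ x ∧ u ≠ y ∧ u ≠ z := by
    intro u hu
    simpa using (Finset.mem_sdiff.1 hu).2
  set W := N \ {x, y, z} with hW
  have hW2 := hN2.mono hWN
  have hWj : NT c W j := by
    intro p hp q hq r hr pq pr qr
    have mx : x ∈ ({x, y, z} : Finset V) := by simp
    have my : y ∈ ({x, y, z} : Finset V) := by simp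
    exact hj p (hNS (hWN hp)) q (hNS (hWN hq)) r (hNS (hWN hr)) x (hNS hx) y (hNS hy) pq pr
      ((o1 x mx p hp).symm' hs) qr ((o1 x mx q hq).symm' hs) ((o1 x mx r hr).symm' hs)
      ((o1 y my p hp).symm' hs) ((o1 y my q hq).symm' hs) (Ne.symm (hWn r hr).2.1) xy.1.symm
  obtain ⟨x2, hx2, y2, hy2, z2, hz2, xy2, xz2, yz2⟩ := exists_tri (c := c) (N := W) (i := i)
    (fun h => by have := R33 hW2 h hWj; omega)
  have o2 := tri_out hs hW2 (hNP.mono hWN) hx2 hy2 hz2 xy2 xz2 yz2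
  have c2 := tri_pair_sdiff W x2 y2 z2
  have hUW : W \ {x2, y2, z2} ⊆ W := Finset.sdiff_subset
  set U := W \ {x2, y2, z2} with hU
  have hU2 := hW2.mono hUW
  have hUj : NE c U j := by
    intro p hp q hq pq
    have mx : x2 ∈ ({x2, y2, z2} : Finset V) := by simp
    exact hWj x2 hx2 p (hUW hp) q (hUW hq) (o2 x2 mx p hp) (o2 x2 mx q hq) pq
  obtain ⟨x3, hx3, y3, hy3, z3, hz3, xy3, xz3, yz3⟩ := three_of (s := U) (by omega)
  replace xy3 := other hU2.swap hUj hx3 hy3 xy3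
  replace xz3 := other hU2.swap hUj hx3 hz3 xz3
  replace yz3 := other hU2.swap hUj hy3 hz3 yz3
  have hUc : U.card ≤ 3 := by
    by_contra h4
    obtain ⟨p, hp, q, hq, r, hr, t, ht, g1, g2, g3, g4, g5, g6⟩ := four_of (s := U) (by omega)
    exact hNP p (hWN (hUW hp)) q (hWN (hUW hq)) r (hWN (hUW hr)) t (hWN (hUW ht))
      (other hU2.swap hUj hp hq g1) (other hU2.swap hUj hp hr g2) (other hU2.swap hUj hq hr g3)
      (other hU2.swap hUj hp ht g4) g5.symm g6.symm
  obtain ⟨w, hw⟩ : (S \ insert v N).Nonempty := by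
    apply Finset.card_pos.1
    have := Finset.le_card_sdiff (insert v N) S
    have := Finset.card_insert_le v N
    omega
  simp only [Finset.mem_sdiff, Finset.mem_insert, not_or] at hw
  obtain ⟨hwS, hwv, hwN⟩ := hw
  have ne : ∀ u ∈ N, w ≠ u := fun u hu h => hwN (h ▸ hu)
  have hWS : W ⊆ S := hWN.trans hNS
  have hUN : U ⊆ N := hUW.trans hWN
  have hUS : U ⊆ S := hUN.trans hNS
  obtain ⟨p, hp, p', hp', pp, wp, wp'⟩ := tripair hs h2 hi hv (hNS hx) (hNS hy) (hNS hz) hwS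
    (hNv _ hx) (hNv _ hy) (hNv _ hz) xy xz yz hwv (ne _ hx) (ne _ hy) (ne _ hz)
  obtain ⟨q, hq, -, -, -, wq, -⟩ := tripair hs h2 hi hv (hWS hx2) (hWS hy2) (hWS hz2) hwS
    (hNv _ (hWN hx2)) (hNv _ (hWN hy2)) (hNv _ (hWN hz2)) xy2 xz2 yz2 hwv (ne _ (hWN hx2))
    (ne _ (hWN hy2)) (ne _ (hWN hz2))
  obtain ⟨r, hr, -, -, -, wr, -⟩ := tripair hs h2 hi hv (hUS hx3) (hUS hy3) (hUS hz3) hwS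
    (hNv _ (hUN hx3)) (hNv _ (hUN hy3)) (hNv _ (hUN hz3)) xy3 xz3 yz3 hwv (ne _ (hUN hx3))
    (ne _ (hUN hy3)) (ne _ (hUN hz3))
  have sub : ∀ {a b d : V} {X : Finset V}, a ∈ X → b ∈ X → d ∈ X → ∀ u ∈ ({a, b, d} : Finset V),
      u ∈ X := by
    intro a b d X ha hb hd u hu
    simp only [Finset.mem_insert, Finset.mem_singleton] at hu
    rcases hu with rfl | rfl | rfl <;> assumption
  have pN := sub hx hy hz p hp
  have pN' := sub hx hy hz p' hp'
  have qW := sub hx2 hy2 hz2 q hq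
  have rU := sub hx3 hy3 hz3 r hr
  exact hj q (hWS qW) r (hUS rU) w hwS p (hNS pN) p' (hNS pN') (o2 q hq r rU) (wq.symm' hs)
    ((o1 p hp q qW).symm' hs) (wr.symm' hs) ((o1 p hp r (hUW rU)).symm' hs) wp
    ((o1 p' hp' q qW).symm' hs) ((o1 p' hp' r (hUW rU)).symm' hs) (ne _ pN').symm pp.symm

theorem RHH (hs : ∀ x y, c x y = c y x) {S : Finset V} {i j : κ} (hij : i ≠ j)
    (h2 : Two c S i j) (hi : NH c S i) (hj : NH c S j) : S.card ≤ 17 := by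
  by_contra hc
  obtain ⟨v, hv⟩ : S.Nonempty := Finset.card_pos.1 (by omega)
  have h1 := nb_card h2 hv
  by_cases h : 9 ≤ (nb c S i v).card
  · exact RHH_half hs hij h2 hi hj hv (by omega) h
  · exact RHH_half hs hij.symm h2.swap hj hi hv (by omega) (by omega)

end ramsey2
section gallai
variable {V κ : Type} [DecidableEq V] [DecidableEq κ] {c : V → V → κ}

def Gal (c : V → V → κ) : Prop :=
  ∀ x y z, x ≠ y → x ≠ z → y ≠ z → c x y = c x z ∨ c x y = c y z ∨ c x z = c y z

def Rch (c : V → V → κ) (S : Finset V) (i : κ) : V → V → Prop :=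
  Relation.ReflTransGen (fun a b => a ∈ S ∧ b ∈ S ∧ E c i a b)

theorem Rch.single' {S : Finset V} {i : κ} {x y : V} (hx : x ∈ S) (hy : y ∈ S) (h : E c i x y) :
    Rch c S i x y := Relation.ReflTransGen.single ⟨hx, hy, h⟩

theorem Rch.symm' (hs : ∀ x y, c x y = c y x) {S : Finset V} {i : κ} {x y : V}
    (h : Rch c S i x y) : Rch c S i y x := by
  induction h with
  | refl => exact Relation.ReflTransGen.refl
  | tail _ h2 ih => exact Relation.ReflTransGen.head ⟨h2.2.1, h2.1, h2.2.2.symm' hs⟩ ih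

theorem Rch.trans' {S : Finset V} {i : κ} {x y z : V}
    (h : Rch c S i x y) (h' : Rch c S i y z) : Rch c S i x z := Relation.ReflTransGen.trans h h'

theorem Rch.mem {S : Finset V} {i : κ} {x y : V} (h : Rch c S i x y) (hx : x ∈ S) : y ∈ S := by
  induction h with
  | refl => exact hx
  | tail _ h2 _ => exact h2.2.1

theorem Rch.module (hs : ∀ x y, c x y = c y x) (hg : Gal c) {S : Finset V} {i : κ} {x y w : V}
    (h : Rch c S i x y) (hx : x ∈ S) (hw : w ∈ S) (hn : ¬ Rch c S i x w) : c w x = c w y := by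
  induction h with
  | refl => rfl
  | @tail b d hb hbd ih =>
    have hd : Rch c S i x d := hb.tail hbd
    have wb : w ≠ b := fun h => hn (h ▸ hb)
    have wd : w ≠ d := fun h => hn (h ▸ hd)
    have n1 : c w b ≠ i := fun h =>
      hn (Rch.trans' hb (Rch.single' hbd.1 hw (E.symm' hs ⟨wb, h⟩)))
    have n2 : c w d ≠ i := fun h =>
      hn (Rch.trans' hd (Rch.single' hbd.2.1 hw (E.symm' hs ⟨wd, h⟩)))
    have e := hbd.2.2.2
    rcases hg w b d wb wd hbd.2.2.1 with h | h | h
    · exact ih.trans h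
    · exact absurd (h.trans e) n1
    · exact absurd (h.trans e) n2

def Conn (c : V → V → κ) (S : Finset V) (i : κ) : Prop := ∀ x ∈ S, ∀ y ∈ S, Rch c S i x y

theorem exists_nb_of_conn {S : Finset V} {i : κ} (h : Conn c S i) (hS : 2 ≤ S.card) {v : V}
    (hv : v ∈ S) : ∃ w ∈ S.erase v, c v w = i := by
  obtain ⟨y, hy⟩ : (S.erase v).Nonempty := Finset.card_pos.1
    (by rw [Finset.card_erase_of_mem hv]; omega)
  have hy' := Finset.mem_erase.1 hy
  rcases Relation.ReflTransGen.cases_head (h v hv y hy'.2) with h | ⟨w, h, -⟩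
  · exact absurd h.symm hy'.1
  · exact ⟨w, Finset.mem_erase.2 ⟨h.2.2.1.symm, h.2.1⟩, h.2.2.2⟩

theorem last_before {S : Finset V} {i : κ} {x v : V} (hx : x ∈ S.erase v)
    (h : Rch c S i x v) : ∃ u ∈ S.erase v, Rch c (S.erase v) i x u ∧ c u v = i := by
  have key : ∀ y, Rch c S i x y → (∃ u ∈ S.erase v, Rch c (S.erase v) i x u ∧ c u v = i) ∨
      (y ∈ S.erase v ∧ Rch c (S.erase v) i x y) := by
    intro y hy
    induction hy with
    | refl => exact Or.inr ⟨hx, Relation.ReflTransGen.refl⟩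
    | @tail b d hb hbd ih =>
      rcases ih with ih | ih
      · exact Or.inl ih
      · by_cases hdv : d = v
        · subst hdv
          exact Or.inl ⟨b, ih.1, ih.2, hbd.2.2.2⟩
        · have hd : d ∈ S.erase v := Finset.mem_erase.2 ⟨hdv, hbd.2.1⟩
          exact Or.inr ⟨hd, Relation.ReflTransGen.tail ih.2 ⟨ih.1, hd, hbd.2.2⟩⟩
  rcases key v h with h | h
  · exact h
  · simp at h

theorem disc_step (hs : ∀ x y, c x y = c y x) (hg : Gal c) {S : Finset V} {i j l : κ}
    (hij : i ≠ j) (hil : i ≠ l) (hjl : j ≠ l) (hS : 2 ≤ S.card)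
    (ci : Conn c S i) (cj : Conn c S j) (cl : Conn c S l) {v : V} (hv : v ∈ S)
    (hn : ¬ Conn c (S.erase v) i) : False := by
  obtain ⟨w, hw, vw⟩ := exists_nb_of_conn cj hS hv
  obtain ⟨z, hz, vz⟩ := exists_nb_of_conn cl hS hv
  have claim : ∀ m, i ≠ m → ∀ w ∈ S.erase v, c v w = m → ∀ t ∈ S.erase v,
      ¬ Rch c (S.erase v) i w t → c w t = m := by
    intro m him w hw vw t ht hwt
    obtain ⟨u, hu, htu, huv⟩ := last_before ht (ci t (Finset.mem_of_mem_erase ht) v hv)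
    have hwu : ¬ Rch c (S.erase v) i w u := fun h => hwt (h.trans' (htu.symm' hs))
    have e1 : c w t = c w u := htu.module hs hg ht hw (fun h => hwt (h.symm' hs))
    have nwu : w ≠ u := fun h => hwu (h ▸ Relation.ReflTransGen.refl)
    have n : c w u ≠ i := fun h => hwu (Rch.single' hw hu ⟨nwu, h⟩)
    rw [e1]
    have vu : c v u = i := (hs v u).trans huv
    rcases hg v w u (Finset.ne_of_mem_erase hw).symm (Finset.ne_of_mem_erase hu).symm nwu
      with h | h | h
    · exact absurd (vu.symm.trans (h.symm.trans vw)) him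
    · exact h.symm.trans vw
    · exact absurd (h.symm.trans vu) n
  by_cases hwz : Rch c (S.erase v) i w z
  · obtain ⟨t, ht, hwt⟩ : ∃ t ∈ S.erase v, ¬ Rch c (S.erase v) i w t := by
      by_contra hcon
      push Not at hcon
      exact hn (fun x hx y hy => ((hcon x hx).symm' hs).trans' (hcon y hy))
    have e1 := claim j hij w hw vw t ht hwt
    have e2 := claim l hil z hz vz t ht (fun h => hwt (hwz.trans' h))
    have e3 := hwz.module hs hg hw ht hwt
    rw [hs t w, hs t z, e1, e2] at e3
    exact hjl e3
  · have e1 := claim j hij w hw vw z hz hwz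
    have e2 := claim l hil z hz vz w hw (fun h => hwz (h.symm' hs))
    rw [hs z w, e1] at e2
    exact hjl e2

theorem disc (hs : ∀ x y, c x y = c y x) (hg : Gal c) {i j l : κ}
    (hij : i ≠ j) (hil : i ≠ l) (hjl : j ≠ l) : ∀ n : ℕ, ∀ S : Finset V, S.card = n → 2 ≤ n →
    Conn c S i → Conn c S j → Conn c S l → False := by
  intro n
  induction n with
  | zero => intro S _ h; omega
  | succ n ih =>
    intro S hS h2 ci cj cl
    obtain ⟨v, hv⟩ : S.Nonempty := Finset.card_pos.1 (by omega)
    have hc : (S.erase v).card = n := by rw [Finset.card_erase_of_mem hv]; omega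
    have h2' : 2 ≤ S.card := by omega
    by_cases hi : Conn c (S.erase v) i
    · by_cases hj : Conn c (S.erase v) j
      · by_cases hl : Conn c (S.erase v) l
        · by_cases hn : 2 ≤ n
          · exact ih _ hc hn hi hj hl
          · obtain ⟨w, hw, e⟩ := exists_nb_of_conn ci h2' hv
            obtain ⟨w', hw', e'⟩ := exists_nb_of_conn cj h2' hv
            have : w = w' := Finset.card_le_one.1 (by omega : (S.erase v).card ≤ 1) w hw w' hw'
            subst this
            exact hij (e.symm.trans e')
        · exact disc_step hs hg hil.symm hjl.symm hij h2' cl ci cj hv hl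
      · exact disc_step hs hg hij.symm hjl hil h2' cj ci cl hv hj
    · exact disc_step hs hg hij hil hjl h2' ci cj cl hv hi

/-- Gallai partition in terms of representatives -/
theorem gallai (hs : ∀ x y, c x y = c y x) (hg : Gal c) : ∀ n : ℕ, ∀ S : Finset V, S.card = n →
    2 ≤ n → ∃ (R : Finset V) (π : V → V) (i j : κ), R ⊆ S ∧ 2 ≤ R.card ∧ (∀ x ∈ S, π x ∈ R) ∧
      (∀ r ∈ R, π r = r) ∧ (∀ x ∈ S, ∀ y ∈ S, π x ≠ π y → c x y = c (π x) (π y)) ∧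
      Two c R i j := by
  intro n
  induction n using Nat.strong_induction_on with
  | _ n ih =>
  intro S hS h2
  by_cases h3 : ∃ i j, Two c S i j
  · obtain ⟨i, j, h⟩ := h3
    exact ⟨S, id, i, j, subset_rfl, by omega, by simp, by simp, by simp, h⟩
  · -- three used colors
    have hused : ∃ i j l, i ≠ j ∧ i ≠ l ∧ j ≠ l ∧ (∃ a ∈ S, ∃ b ∈ S, E c i a b) ∧
        (∃ a ∈ S, ∃ b ∈ S, E c j a b) ∧ (∃ a ∈ S, ∃ b ∈ S, E c l a b) := by
      push Not at h3
      obtain ⟨a, ha, b, hb, hab⟩ := Finset.one_lt_card.1 (by omega : 1 < S.card)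
      have g1 := h3 (c a b) (c a b)
      simp only [Two] at g1
      push Not at g1
      obtain ⟨a', ha', b', hb', hab', n1, -⟩ := g1
      have g2 := h3 (c a b) (c a' b')
      simp only [Two] at g2
      push Not at g2
      obtain ⟨a'', ha'', b'', hb'', hab'', n2, n3⟩ := g2
      refine ⟨c a b, c a' b', c a'' b'', fun h => n1 ⟨hab', h.symm⟩, fun h => n2 ⟨hab'', h.symm⟩,
        fun h => n3 ⟨hab'', h.symm⟩, ⟨a, ha, b, hb, hab, rfl⟩, ⟨a', ha', b', hb', hab', rfl⟩,
        ⟨a'', ha'', b'', hb'', hab'', rfl⟩⟩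
    obtain ⟨i, j, l, hij, hil, hjl, ui, uj, ul⟩ := hused
    have hd : ∃ i, (∃ a ∈ S, ∃ b ∈ S, E c i a b) ∧ ¬ Conn c S i := by
      by_contra hcon
      push Not at hcon
      exact disc hs hg hij hil hjl n S hS h2 (hcon i ui) (hcon j uj) (hcon l ul)
    clear ui uj ul hij hil hjl
    obtain ⟨m, ⟨a, ha, b, hb, hab⟩, hnc⟩ := hd
    haveI : Nonempty V := ⟨a⟩
    let f : V → V := fun x => Classical.epsilon (Rch c S m x)
    have hf : ∀ x, Rch c S m x (f x) := fun x =>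
      Classical.epsilon_spec (p := Rch c S m x) ⟨x, Relation.ReflTransGen.refl⟩
    have hfe : ∀ x y, Rch c S m x y → f x = f y := by
      intro x y hxy
      have : Rch c S m x = Rch c S m y := by
        funext z
        exact propext ⟨fun h => (hxy.symm' hs).trans' h, fun h => hxy.trans' h⟩
      simp only [f, this]
    have hfr : ∀ x y, f x = f y → Rch c S m x y := by
      intro x y h
      have := hf x
      rw [h] at this
      exact this.trans' ((hf y).symm' hs)
    have hfS : ∀ x ∈ S, f x ∈ S := fun x hx => (hf x).mem hx
    have hff : ∀ x, f (f x) = f x := fun x => (hfe _ _ (hf x)).symm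
    have hR0S : S.image f ⊆ S := by
      intro y hy
      obtain ⟨x, hx, rfl⟩ := Finset.mem_image.1 hy
      exact hfS x hx
    have hmod : ∀ x ∈ S, ∀ y ∈ S, f x ≠ f y → c x y = c (f x) (f y) := by
      intro x hx y hy hxy
      have n1 : ¬ Rch c S m x y := fun h => hxy (hfe _ _ h)
      have e1 := (hf x).module hs hg hx hy n1
      have e2 := (hf y).module hs hg hy (hfS x hx) (fun h => hxy (by
        rw [hfe _ _ h, hff]))
      rw [hs x y, e1, hs y, e2]
    have hlt : (S.image f).card < n := by
      rw [← hS]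
      refine lt_of_le_of_ne Finset.card_image_le ?_
      intro h
      have := Finset.card_image_iff.1 h
      exact hab.1 (this ha hb (hfe _ _ (Rch.single' ha hb hab)))
    have hge : 2 ≤ (S.image f).card := by
      simp only [Conn] at hnc
      push Not at hnc
      obtain ⟨x, hx, y, hy, hxy⟩ := hnc
      exact Finset.one_lt_card.2 ⟨f x, Finset.mem_image_of_mem _ hx, f y,
        Finset.mem_image_of_mem _ hy, fun h => hxy (hfr _ _ h)⟩
    obtain ⟨R, π, i, j, hRS, hR2, hπ, hπr, hπm, htwo⟩ := ih _ hlt (S.image f) rfl hge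
    refine ⟨R, fun x => π (f x), i, j, hRS.trans hR0S, hR2,
      fun x hx => hπ _ (Finset.mem_image_of_mem _ hx), ?_, ?_, htwo⟩
    · intro r hr
      obtain ⟨x, hx, rfl⟩ := Finset.mem_image.1 (hRS hr)
      simp only [hff]
      exact hπr _ hr
    · intro x hx y hy hxy
      have hxy' : f x ≠ f y := fun h => hxy (by simp only [h])
      rw [hmod x hx y hy hxy']
      exact hπm _ (Finset.mem_image_of_mem _ hx) _ (Finset.mem_image_of_mem _ hy) hxy

/-- `S` is the disjoint union of nonempty `A`, `B`, completely joined in color `i` -/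
def Join (c : V → V → κ) (S A B : Finset V) (i : κ) : Prop :=
  A.Nonempty ∧ B.Nonempty ∧ A ∪ B = S ∧ ∀ x ∈ A, ∀ y ∈ B, E c i x y

theorem gallai_dich (hs : ∀ x y, c x y = c y x) (hg : Gal c) {S : Finset V} (hS : 2 ≤ S.card) :
    (∃ A B i, Join c S A B i) ∨
    ∃ (R : Finset V) (π : V → V) (i j : κ), i ≠ j ∧ R ⊆ S ∧ 2 ≤ R.card ∧ (∀ x ∈ S, π x ∈ R) ∧
      (∀ r ∈ R, π r = r) ∧ (∀ x ∈ S, ∀ y ∈ S, π x ≠ π y → c x y = c (π x) (π y)) ∧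
      Two c R i j ∧ (∀ X ⊆ R, X.Nonempty → (R \ X).Nonempty → ∃ x ∈ X, ∃ y ∈ R \ X, E c i x y) ∧
      (∀ X ⊆ R, X.Nonempty → (R \ X).Nonempty → ∃ x ∈ X, ∃ y ∈ R \ X, E c j x y) := by
  by_cases hJ : ∃ A B i, Join c S A B i
  · exact Or.inl hJ
  right
  obtain ⟨R, π, i, j, hRS, hR2, hπ, hπr, hπm, htwo⟩ := gallai hs hg _ S rfl hS
  have key : ∀ i j, Two c R i j → ∀ X ⊆ R, X.Nonempty → (R \ X).Nonempty →
      ∃ x ∈ X, ∃ y ∈ R \ X, E c i x y := by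
    intro i j htwo X hX hXn hXc
    by_contra hcon
    push Not at hcon
    apply hJ
    refine ⟨S.filter (fun x => π x ∈ X), S.filter (fun x => π x ∉ X), j, ?_, ?_, ?_, ?_⟩
    · obtain ⟨x, hx⟩ := hXn
      exact ⟨x, Finset.mem_filter.2 ⟨hRS (hX hx), by rwa [hπr x (hX hx)]⟩⟩
    · obtain ⟨x, hx⟩ := hXc
      rw [Finset.mem_sdiff] at hx
      exact ⟨x, Finset.mem_filter.2 ⟨hRS hx.1, by rw [hπr x hx.1]; exact hx.2⟩⟩
    · exact Finset.filter_union_filter_not_eq _ S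
    · intro x hx y hy
      rw [Finset.mem_filter] at hx hy
      have ne : π x ≠ π y := fun h => hy.2 (h ▸ hx.2)
      have := (htwo _ (hπ x hx.1) _ (hπ y hy.1) ne).resolve_left
        (hcon _ hx.2 _ (Finset.mem_sdiff.2 ⟨hπ y hy.1, hy.2⟩))
      exact ⟨fun h => ne (by rw [h]), (hπm x hx.1 y hy.1 ne).trans this.2⟩
  refine ⟨R, π, i, j, ?_, hRS, hR2, hπ, hπr, hπm, htwo, key i j htwo, key j i htwo.swap⟩
  rintro rfl
  -- all reduced edges have the same color: a join
  obtain ⟨r, hr, r', hr', hrr⟩ := Finset.one_lt_card.1 (by omega : 1 < R.card)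
  apply hJ
  refine ⟨S.filter (fun x => π x = r), S.filter (fun x => ¬ π x = r), i, ?_, ?_, ?_, ?_⟩
  · exact ⟨r, Finset.mem_filter.2 ⟨hRS hr, hπr r hr⟩⟩
  · exact ⟨r', Finset.mem_filter.2 ⟨hRS hr', by rw [hπr r' hr']; exact hrr.symm⟩⟩
  · exact Finset.filter_union_filter_not_eq _ S
  · intro x hx y hy
    rw [Finset.mem_filter] at hx hy
    have ne : π x ≠ π y := fun h => hy.2 (h ▸ hx.2)
    have := (htwo _ (hπ x hx.1) _ (hπ y hy.1) ne).elim id id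
    exact ⟨fun h => ne (by rw [h]), (hπm x hx.1 y hy.1 ne).trans this.2⟩

end gallai
section weights

def gg : ℕ → ℕ
  | 0 => 1
  | 1 => 2
  | n + 2 => 5 * gg n

def hh : ℕ → ℕ
  | 0 => 1
  | 1 => 4
  | n + 2 => 17 * hh n

theorem gg_facts (n : ℕ) : 1 ≤ gg n ∧ 2 * gg n ≤ gg (n + 1) ∧ 2 * gg (n + 1) ≤ 5 * gg n := by
  induction n using Nat.twoStepInduction with
  | zero => simp [gg]
  | one => simp [gg]
  | more n h1 h2 => simp only [gg] at *; omega

theorem hh_facts (n : ℕ) : 1 ≤ hh n ∧ 4 * hh n ≤ hh (n + 1) ∧ 4 * hh (n + 1) ≤ 17 * hh n := by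
  induction n using Nat.twoStepInduction with
  | zero => simp [hh]
  | one => simp [hh]
  | more n h1 h2 => simp only [hh] at *; omega

def FF (p a b : ℕ) : ℕ := 3 ^ p * gg a * hh b

theorem FF_pos (p a b : ℕ) : 1 ≤ FF p a b :=
  Nat.mul_pos (Nat.mul_pos (by positivity) (gg_facts a).1) (hh_facts b).1
theorem FF_p (p a b : ℕ) : FF (p + 1) a b = 3 * FF p a b := by simp only [FF]; ring
theorem FF_a (p a b : ℕ) : 2 * FF p a b ≤ FF p (a + 1) b := by
  have := Nat.mul_le_mul_left (3 ^ p * hh b) (gg_facts a).2.1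
  simp only [FF]; linarith
theorem FF_a' (p a b : ℕ) : 2 * FF p (a + 1) b ≤ 5 * FF p a b := by
  have := Nat.mul_le_mul_left (3 ^ p * hh b) (gg_facts a).2.2
  simp only [FF]; linarith
theorem FF_b (p a b : ℕ) : 4 * FF p a b ≤ FF p a (b + 1) := by
  have := Nat.mul_le_mul_left (3 ^ p * gg a) (hh_facts b).2.1
  simp only [FF]; linarith
theorem FF_b' (p a b : ℕ) : 4 * FF p a (b + 1) ≤ 17 * FF p a b := by
  have := Nat.mul_le_mul_left (3 ^ p * gg a) (hh_facts b).2.2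
  simp only [FF]; linarith
theorem FF_a2 (p a b : ℕ) : FF p (a + 2) b = 5 * FF p a b := by simp only [FF, gg]; ring
theorem FF_b2 (p a b : ℕ) : FF p a (b + 2) = 17 * FF p a b := by simp only [FF, hh]; ring

variable {κ : Type} [DecidableEq κ] [Fintype κ]

def cnt (t : κ → ℕ) (v : ℕ) : ℕ := (Finset.univ.filter (fun i => t i = v)).card

def MM (t : κ → ℕ) : ℕ := FF (cnt t 2) (cnt t 1) (cnt t 3)

theorem cnt_update (t : κ → ℕ) (i : κ) (w v : ℕ) (hv : v ≠ 0) :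
    cnt (Function.update t i w) v = cnt (Function.update t i 0) v + if w = v then 1 else 0 := by
  unfold cnt
  split_ifs with h
  · subst h
    have hn : i ∉ Finset.univ.filter (fun l => Function.update t i 0 l = w) := by
      simp [hv.symm]
    rw [← Finset.card_insert_of_notMem hn]
    congr 1
    ext l
    by_cases hl : l = i
    · subst hl; simp
    · simp [hl, Function.update_of_ne]
  · rw [add_zero]
    congr 1
    ext l
    by_cases hl : l = i
    · subst hl; simp [h, hv.symm]
    · simp [hl, Function.update_of_ne]

theorem MM_one (t : κ → ℕ) (i : κ) : ∃ p a b, ∀ v, MM (Function.update t i v) =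
    FF (p + if v = 2 then 1 else 0) (a + if v = 1 then 1 else 0) (b + if v = 3 then 1 else 0) :=
  ⟨cnt (Function.update t i 0) 2, cnt (Function.update t i 0) 1, cnt (Function.update t i 0) 3,
    fun v => by simp only [MM, cnt_update t i v _ two_ne_zero, cnt_update t i v _ one_ne_zero,
      cnt_update t i v _ three_ne_zero]⟩

theorem MM_two (t : κ → ℕ) {i j : κ} (hij : i ≠ j) : ∃ p a b, ∀ v w,
    MM (Function.update (Function.update t i v) j w) =
    FF (p + (if v = 2 then 1 else 0) + if w = 2 then 1 else 0)
      (a + (if v = 1 then 1 else 0) + if w = 1 then 1 else 0)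
      (b + (if v = 3 then 1 else 0) + if w = 3 then 1 else 0) := by
  let t0 := Function.update (Function.update t j 0) i 0
  have key : ∀ v w z, z ≠ 0 → cnt (Function.update (Function.update t i v) j w) z =
      cnt t0 z + (if v = z then 1 else 0) + if w = z then 1 else 0 := by
    intro v w z hz
    rw [cnt_update _ j w z hz, Function.update_comm hij, cnt_update _ i v z hz]
  refine ⟨cnt t0 2, cnt t0 1, cnt t0 3, fun v w => ?_⟩
  simp only [MM, key v w _ two_ne_zero, key v w _ one_ne_zero, key v w _ three_ne_zero]

theorem MM_pos (t : κ → ℕ) : 1 ≤ MM t := FF_pos _ _ _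

end weights

section joins
variable {V κ : Type} [DecidableEq V] [DecidableEq κ] [Fintype κ] {c : V → V → κ}

def ok (c : V → V → κ) (S : Finset V) (i : κ) : ℕ → Prop
  | 0 => NE c S i
  | 1 => NT c S i
  | 2 => NP c S i
  | 3 => NH c S i
  | _ => False

def valid (c : V → V → κ) (S : Finset V) (t : κ → ℕ) : Prop := ∀ i, ok c S i (t i)

def Bd (c : V → V → κ) (S : Finset V) : Prop := ∀ t, valid c S t → S.card ≤ MM t

theorem ok.mono {S T : Finset V} (h : S ⊆ T) {i : κ} : ∀ {v : ℕ}, ok c T i v → ok c S i v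
  | 0, hh => NE.mono h hh
  | 1, hh => NT.mono h hh
  | 2, hh => NP.mono h hh
  | 3, hh => NH.mono h hh
  | _ + 4, hh => hh

theorem valid.mono {S T : Finset V} (h : S ⊆ T) {t : κ → ℕ} (hv : valid c T t) : valid c S t :=
  fun i => (hv i).mono h

theorem valid.upd {S : Finset V} {t : κ → ℕ} (hv : valid c S t) {i : κ} {v : ℕ}
    (h : ok c S i v) : valid c S (Function.update t i v) := by
  intro l
  by_cases hl : l = i
  · subst hl; simpa using h
  · simpa [hl, Function.update_of_ne] using hv l

def JJ (c : V → V → κ) (A B : Finset V) (i : κ) : Prop := ∀ x ∈ A, ∀ y ∈ B, E c i x y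

theorem JJ.swap (hs : ∀ x y, c x y = c y x) {A B : Finset V} {i : κ} (h : JJ c A B i) :
    JJ c B A i := fun x hx y hy => (h y hy x hx).symm' hs

theorem JJ.card_lt {S A B : Finset V} {i : κ} (h : JJ c A B i) (hA : A ⊆ S) (hB : B ⊆ S)
    (hBn : B.Nonempty) : A.card < S.card := by
  obtain ⟨b, hb⟩ := hBn
  apply Finset.card_lt_card
  exact (Finset.ssubset_iff_of_subset hA).2 ⟨b, hB hb, fun hbA => (h b hbA b hb).1 rfl⟩

theorem JJ.ne {S A B : Finset V} {i : κ} (h : JJ c A B i) (hA : A ⊆ S) (hB : B ⊆ S)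
    (hBn : B.Nonempty) (hs : ∀ x y, c x y = c y x) (hS : NT c S i) : NE c A i := by
  obtain ⟨b, hb⟩ := hBn
  intro x hx y hy hxy
  exact hS x (hA hx) y (hA hy) b (hB hb) hxy (h x hx b hb) (h y hy b hb)

theorem JJ.np {S A B : Finset V} {i : κ} (h : JJ c A B i) (hA : A ⊆ S) (hB : B ⊆ S)
    (hBn : B.Nonempty) (hs : ∀ x y, c x y = c y x) (hS : NH c S i) : NP c A i := by
  obtain ⟨b, hb⟩ := hBn
  have h := h.swap hs
  intro a ha p hp q hq w hw h1 h2 h3 h4 h5 h6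
  exact hS b (hB hb) a (hA ha) p (hA hp) q (hA hq) w (hA hw) (h b hb a ha) (h b hb p hp)
    (h b hb q hq) h1 h2 h3 (h b hb w hw) h4 h5 h6

theorem JJ.nt {S A B : Finset V} {i : κ} (h : JJ c A B i) (hA : A ⊆ S) (hB : B ⊆ S)
    (hBn : 2 ≤ B.card) (hs : ∀ x y, c x y = c y x) (hS : NH c S i) : NT c A i := by
  obtain ⟨b, hb, b', hb', hbb⟩ := Finset.one_lt_card.1 hBn
  intro x hx y hy z hz h1 h2 h3
  exact hS x (hA hx) y (hA hy) z (hA hz) b (hB hb) b' (hB hb') h1 h2 (h x hx b hb) h3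
    (h y hy b hb) (h z hz b hb) (h x hx b' hb') (h y hy b' hb') (h z hz b' hb').1.symm hbb.symm

theorem JJ.ne_other {S A B : Finset V} {i : κ} (h : JJ c A B i) (hA : A ⊆ S) (hB : B ⊆ S)
    (hAn : 3 ≤ A.card) (hs : ∀ x y, c x y = c y x) (hS : NH c S i) (hE : ¬ NE c A i) :
    NE c B i := by
  simp only [NE] at hE
  push Not at hE
  obtain ⟨x, hx, y, hy, hxy, -⟩ := hE
  obtain ⟨z, hz, hzn⟩ : ∃ z ∈ A, z ∉ ({x, y} : Finset V) := by
    apply Finset.exists_mem_notMem_of_card_lt_card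
    exact lt_of_le_of_lt Finset.card_le_two hAn
  simp only [Finset.mem_insert, Finset.mem_singleton, not_or] at hzn
  have h' := h.swap hs
  intro u hu v hv huv
  exact hS u (hB hu) v (hB hv) x (hA hx) y (hA hy) z (hA hz) huv (h' u hu x hx) (h' u hu y hy)
    (h' v hv x hx) (h' v hv y hy) hxy (h' u hu z hz) (h' v hv z hz) hzn.1 hzn.2

theorem joinH (hs : ∀ x y, c x y = c y x) {S A B : Finset V} {i : κ} {t : κ → ℕ}
    (hv : valid c S t) (hti : t i = 3) (hA : A ⊆ S) (hB : B ⊆ S) (hAn : A.Nonempty)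
    (hBn : B.Nonempty) (hJ : JJ c A B i) (bA : Bd c A) (bB : Bd c B) :
    A.card + B.card ≤ 4 * MM (Function.update t i 0) ∧
    (2 ≤ MM (Function.update t i 0) → 2 * (A.card + B.card) ≤ 7 * MM (Function.update t i 0)) := by
  have hS : NH c S i := by have := hv i; rwa [hti] at this
  obtain ⟨p, a, b, hM⟩ := MM_one t i
  have u0 := hM 0
  have u1 := hM 1
  have u2 := hM 2
  simp at u0 u1 u2
  have e1 := FF_p p a b
  have e2 := FF_a' p a b
  have e3 := FF_pos p a b
  have hcA := Finset.card_pos.2 hAn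
  have hcB := Finset.card_pos.2 hBn
  have hJ' := hJ.swap hs
  have vA := hv.mono hA
  have vB := hv.mono hB
  rw [u0]
  by_cases cA : A.card = 1
  · have := bB _ (vB.upd (i := i) (v := 2) (hJ'.np hB hA hAn hs hS))
    omega
  by_cases cB : B.card = 1
  · have := bA _ (vA.upd (i := i) (v := 2) (hJ.np hA hB hBn hs hS))
    omega
  have a1 := bA _ (vA.upd (i := i) (v := 1) (hJ.nt hA hB (by omega) hs hS))
  have b1 := bB _ (vB.upd (i := i) (v := 1) (hJ'.nt hB hA (by omega) hs hS))
  by_cases cA2 : A.card = 2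
  · omega
  by_cases cB2 : B.card = 2
  · omega
  by_cases hE : NE c A i
  · have := bA _ (vA.upd (i := i) (v := 0) hE)
    omega
  · have := bB _ (vB.upd (i := i) (v := 0) (hJ.ne_other hA hB (by omega) hs hS hE))
    omega

end joins
section main
variable {V κ : Type} [DecidableEq V] [DecidableEq κ] [Fintype κ] {c : V → V → κ}

structure Str (c : V → V → κ) (S R : Finset V) (π : V → V) (i j : κ) : Prop where
  ne : i ≠ j
  sub : R ⊆ S
  two_le : 2 ≤ R.card
  mp : ∀ x ∈ S, π x ∈ R
  fix : ∀ r ∈ R, π r = r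
  mod : ∀ x ∈ S, ∀ y ∈ S, π x ≠ π y → c x y = c (π x) (π y)
  two : Two c R i j
  ci : ∀ X ⊆ R, X.Nonempty → (R \ X).Nonempty → ∃ x ∈ X, ∃ y ∈ R \ X, E c i x y
  cj : ∀ X ⊆ R, X.Nonempty → (R \ X).Nonempty → ∃ x ∈ X, ∃ y ∈ R \ X, E c j x y

theorem Str.swap {S R : Finset V} {π : V → V} {i j : κ} (h : Str c S R π i j) :
    Str c S R π j i :=
  ⟨h.ne.symm, h.sub, h.two_le, h.mp, h.fix, h.mod, h.two.swap, h.cj, h.ci⟩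

theorem Str.nbr {S R : Finset V} {π : V → V} {i j : κ} (h : Str c S R π i j) {r : V}
    (hr : r ∈ R) : ∃ s ∈ R, E c i r s := by
  obtain ⟨x, hx, y, hy, hxy⟩ := h.ci {r} (by simpa using hr) (by simp) (by
    apply Finset.card_pos.1
    have := Finset.le_card_sdiff ({r} : Finset V) R
    have := h.two_le
    simp only [Finset.card_singleton] at *
    omega)
  rw [Finset.mem_singleton] at hx
  subst hx
  exact ⟨y, (Finset.mem_sdiff.1 hy).1, hxy⟩

def blk (S : Finset V) (π : V → V) (r : V) : Finset V := S.filter (fun x => π x = r)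

theorem mem_blk {S : Finset V} {π : V → V} {r x : V} : x ∈ blk S π r ↔ x ∈ S ∧ π x = r := by
  simp [blk]

theorem blk_sub {S : Finset V} {π : V → V} {r : V} : blk S π r ⊆ S := Finset.filter_subset _ _

theorem Str.self_mem {S R : Finset V} {π : V → V} {i j : κ} (h : Str c S R π i j) {r : V}
    (hr : r ∈ R) : r ∈ blk S π r := mem_blk.2 ⟨h.sub hr, h.fix r hr⟩

theorem Str.edge {S R : Finset V} {π : V → V} {i j : κ} (h : Str c S R π i j) {x y : V} {l : κ}
    (hx : x ∈ S) (hy : y ∈ S) (hxy : E c l (π x) (π y)) : E c l x y :=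
  ⟨fun e => hxy.1 (by rw [e]), (h.mod x hx y hy hxy.1).trans hxy.2⟩

theorem Str.joined {S R : Finset V} {π : V → V} {i j : κ} (h : Str c S R π i j) {r s : V} {l : κ}
    (hrs : E c l r s) : JJ c (blk S π r) (blk S π s) l := by
  intro x hx y hy
  rw [mem_blk] at hx hy
  exact h.edge hx.1 hy.1 (by rw [hx.2, hy.2]; exact hrs)

theorem Str.blk_lt {S R : Finset V} {π : V → V} {i j : κ} (h : Str c S R π i j) {r : V}
    (hr : r ∈ R) : (blk S π r).card < S.card := by
  obtain ⟨s, hs, hrs⟩ := h.nbr hr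
  exact (h.joined hrs).card_lt blk_sub blk_sub ⟨s, h.self_mem hs⟩

theorem Str.blk_ne (hs : ∀ x y, c x y = c y x) {S R : Finset V} {π : V → V} {i j : κ}
    (h : Str c S R π i j) {r : V} (hr : r ∈ R) (hS : NT c S i) : NE c (blk S π r) i := by
  obtain ⟨s, hs', hrs⟩ := h.nbr hr
  exact (h.joined hrs).ne blk_sub blk_sub ⟨s, h.self_mem hs'⟩ hs hS

theorem Str.blk_np (hs : ∀ x y, c x y = c y x) {S R : Finset V} {π : V → V} {i j : κ}
    (h : Str c S R π i j) {r : V} (hr : r ∈ R) (hS : NH c S i) : NP c (blk S π r) i := by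
  obtain ⟨s, hs', hrs⟩ := h.nbr hr
  exact (h.joined hrs).np blk_sub blk_sub ⟨s, h.self_mem hs'⟩ hs hS

theorem Str.collect {S R : Finset V} {π : V → V} {i j : κ}
    (h : Str c S R π i j) (α x m : ℕ)
    (hK : ∀ r ∈ R, ∃ K ⊆ blk S π r, Two c K i j ∧ α * (blk S π r).card ≤ K.card * x)
    (hm : ∀ K ⊆ S, Two c K i j → K.card ≤ m) : α * S.card ≤ m * x := by
  have hK' : ∀ r, ∃ K : Finset V, r ∈ R → K ⊆ blk S π r ∧ Two c K i j ∧
      α * (blk S π r).card ≤ K.card * x := by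
    intro r
    by_cases hr : r ∈ R
    · obtain ⟨K, h⟩ := hK r hr
      exact ⟨K, fun _ => h⟩
    · exact ⟨∅, fun h => absurd h hr⟩
  choose K hK using hK'
  have c1 : S.card = ∑ r ∈ R, (blk S π r).card :=
    Finset.card_eq_sum_card_fiberwise (fun x hx => h.mp x hx)
  have c2 : (R.biUnion K).card = ∑ r ∈ R, (K r).card := by
    apply Finset.card_biUnion
    intro r hr s hs hrs
    show Disjoint (K r) (K s)
    rw [Finset.disjoint_left]
    intro y hy hy'
    have e1 := (mem_blk.1 ((hK r hr).1 hy)).2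
    have e2 := (mem_blk.1 ((hK s hs).1 hy')).2
    exact hrs (e1.symm.trans e2)
  have c3 : (R.biUnion K).card ≤ m := by
    apply hm
    · intro y hy
      obtain ⟨r, hr, hy⟩ := Finset.mem_biUnion.1 hy
      exact blk_sub ((hK r hr).1 hy)
    · intro y hy z hz hyz
      obtain ⟨r, hr, hy⟩ := Finset.mem_biUnion.1 hy
      obtain ⟨s, hs, hz⟩ := Finset.mem_biUnion.1 hz
      by_cases hrs : r = s
      · subst hrs
        exact (hK r hr).2.1 y hy z hz hyz
      · have hy' := mem_blk.1 ((hK r hr).1 hy)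
        have hz' := mem_blk.1 ((hK s hs).1 hz)
        rcases h.two r hr s hs hrs with e | e
        · exact Or.inl (h.edge hy'.1 hz'.1 (by rw [hy'.2, hz'.2]; exact e))
        · exact Or.inr (h.edge hy'.1 hz'.1 (by rw [hy'.2, hz'.2]; exact e))
  calc α * S.card = ∑ r ∈ R, α * (blk S π r).card := by rw [c1, Finset.mul_sum]
    _ ≤ ∑ r ∈ R, (K r).card * x := Finset.sum_le_sum (fun r hr => (hK r hr).2.2)
    _ = (R.biUnion K).card * x := by rw [c2, Finset.sum_mul]
    _ ≤ m * x := Nat.mul_le_mul_right _ c3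

theorem two_singleton (c : V → V → κ) (r : V) (i j : κ) : Two c {r} i j := by
  intro x hx y hy hxy
  rw [Finset.mem_singleton] at hx hy
  exact absurd (hx.trans hy.symm) hxy

theorem two_pair (hs : ∀ x y, c x y = c y x) {x y : V} {i j : κ} (h : E c i x y ∨ E c j x y) :
    Two c {x, y} i j := by
  have h' : E c i y x ∨ E c j y x := h.imp (fun h => h.symm' hs) (fun h => h.symm' hs)
  intro a ha b hb hab
  simp only [Finset.mem_insert, Finset.mem_singleton] at ha hb
  rcases ha with rfl | rfl <;> rcases hb with rfl | rfl
  · exact absurd rfl hab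
  · exact h
  · exact h'
  · exact absurd rfl hab

theorem two_triple (hs : ∀ x y, c x y = c y x) {x y z : V} {i j : κ} (h1 : E c j x y)
    (h2 : E c j x z) (h3 : E c j y z) : Two c {x, y, z} i j := by
  intro a ha b hb hab
  right
  simp only [Finset.mem_insert, Finset.mem_singleton] at ha hb
  rcases ha with rfl | rfl | rfl <;> rcases hb with rfl | rfl | rfl <;>
    first
    | exact absurd rfl hab
    | assumption
    | (apply E.symm' hs; assumption)

theorem exists_edge {N : Finset V} {i : κ} (h : ¬ NE c N i) :
    ∃ x ∈ N, ∃ y ∈ N, E c i x y := by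
  simp only [NE] at h
  push Not at h
  obtain ⟨x, hx, y, hy, h1, -⟩ := h
  exact ⟨x, hx, y, hy, h1⟩

/-- both colors of triangle type -/
theorem Str.case11 (hs : ∀ x y, c x y = c y x) {S R : Finset V} {π : V → V} {i j : κ}
    (h : Str c S R π i j) {t : κ → ℕ} (hv : valid c S t) (hi : t i = 1) (hj : t j = 1)
    (IH : ∀ T : Finset V, T.card < S.card → Bd c T) : S.card ≤ MM t := by
  have hSi : NT c S i := by have := hv i; rwa [hi] at this
  have hSj : NT c S j := by have := hv j; rwa [hj] at this
  obtain ⟨p, a, b, hM⟩ := MM_two t h.ne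
  have u0 := hM 0 0
  have u1 := hM (t i) (t j)
  simp [hi, hj] at u0 u1
  have ut : MM t = FF p (a + 1 + 1) b := by
    rw [← u1]; congr 1
    rw [← hi, Function.update_eq_self, hi, ← hj, Function.update_eq_self]
  have e := FF_a2 p a b
  have := h.collect 1 (FF p a b) 5 (by
    intro r hr
    refine ⟨{r}, by simpa using h.self_mem hr, two_singleton c r i j, ?_⟩
    have := IH _ (h.blk_lt hr) _ (((hv.mono blk_sub).upd (i := i) (v := 0)
      (h.blk_ne hs hr hSi)).upd (i := j) (v := 0) (h.swap.blk_ne hs hr hSj))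
    simp
    omega) (fun K hK h2 => R33 h2 (hSi.mono hK) (hSj.mono hK))
  rw [ut, show a + 1 + 1 = a + 2 from rfl, e]
  omega

/-- `i` of triangle type, `j` of type `H` -/
theorem Str.case13 (hs : ∀ x y, c x y = c y x) {S R : Finset V} {π : V → V} {i j : κ}
    (h : Str c S R π i j) {t : κ → ℕ} (hv : valid c S t) (hi : t i = 1) (hj : t j = 3)
    (IH : ∀ T : Finset V, T.card < S.card → Bd c T) : S.card ≤ MM t := by
  have hSi : NT c S i := by have := hv i; rwa [hi] at this
  have hSj : NH c S j := by have := hv j; rwa [hj] at this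
  obtain ⟨p, a, b, hM⟩ := MM_two t h.ne
  have u0 := hM 0 0
  have u1 := hM 0 1
  have u2 := hM 0 2
  have u3 := hM (t i) (t j)
  simp [hi, hj] at u0 u1 u2 u3
  have ut : MM t = FF p (a + 1) (b + 1) := by
    rw [← u3]; congr 1
    rw [← hi, Function.update_eq_self, ← hj, Function.update_eq_self]
  have e1 := FF_a p a b
  have e2 := FF_b p (a + 1) b
  have e3 := FF_p p a b
  have := h.collect 2 (FF p (a + 1) b) 8 (by
    intro r hr
    have bI := IH _ (h.blk_lt hr)
    have vI := (hv.mono blk_sub).upd (i := i) (v := 0) (h.blk_ne hs hr hSi)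
    by_cases hE : NE c (blk S π r) j
    · refine ⟨{r}, by simpa using h.self_mem hr, two_singleton c r i j, ?_⟩
      have := bI _ (vI.upd (i := j) (v := 0) hE)
      simp
      omega
    by_cases hT : NT c (blk S π r) j
    · obtain ⟨x, hx, y, hy, hxy⟩ := exists_edge hE
      refine ⟨{x, y}, ?_, two_pair hs (Or.inr hxy), ?_⟩
      · simp [Finset.insert_subset_iff, hx, hy]
      · have := bI _ (vI.upd (i := j) (v := 1) hT)
        rw [Finset.card_pair hxy.1]
        omega
    · obtain ⟨x, hx, y, hy, z, hz, xy, xz, yz⟩ := exists_tri hT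
      refine ⟨{x, y, z}, ?_, two_triple hs xy xz yz, ?_⟩
      · simp [Finset.insert_subset_iff, hx, hy, hz]
      · have := bI _ (vI.upd (i := j) (v := 2) (h.swap.blk_np hs hr hSj))
        rw [Finset.card_eq_three.2 ⟨x, y, z, xy.1, xz.1, yz.1, rfl⟩]
        omega) (fun K hK h2 => R3H hs h.ne h2 (hSi.mono hK) (hSj.mono hK))
  rw [ut]
  omega

/-- the vertices in blocks joined to block `r` by color `i` -/
def nbS (c : V → V → κ) (S : Finset V) (π : V → V) (i : κ) (r : V) : Finset V :=
  S.filter (fun x => r ≠ π x ∧ c r (π x) = i)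

theorem mem_nbS {S : Finset V} {π : V → V} {i : κ} {r x : V} :
    x ∈ nbS c S π i r ↔ x ∈ S ∧ E c i r (π x) := by simp [nbS, E]

theorem nbS_sub {S : Finset V} {π : V → V} {i : κ} {r : V} : nbS c S π i r ⊆ S :=
  Finset.filter_subset _ _

theorem Str.nbS_joined {S R : Finset V} {π : V → V} {i j : κ} (h : Str c S R π i j) {r : V}
    {l : κ} : JJ c (blk S π r) (nbS c S π l r) l := by
  intro x hx y hy
  rw [mem_blk] at hx
  rw [mem_nbS] at hy
  exact h.edge hx.1 hy.1 (by rw [hx.2]; exact hy.2)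

theorem Str.nbS_nonempty {S R : Finset V} {π : V → V} {i j : κ} (h : Str c S R π i j) {r : V}
    (hr : r ∈ R) : (nbS c S π i r).Nonempty := by
  obtain ⟨s, hs, hrs⟩ := h.nbr hr
  exact ⟨s, mem_nbS.2 ⟨h.sub hs, by rwa [h.fix s hs]⟩⟩

theorem Str.nbS_bound (hs : ∀ x y, c x y = c y x) {S R : Finset V} {π : V → V} {i j : κ}
    (h : Str c S R π i j) {t : κ → ℕ} (hv : valid c S t) (hj : t j = 3)
    (IH : ∀ T : Finset V, T.card < S.card → Bd c T) {r : V} (hr : r ∈ R)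
    (hN : NE c (nbS c S π i r) i) {u : ℕ}
    (hu : u = MM (Function.update (Function.update t i 0) j 0)) :
    (nbS c S π i r).card ≤ 4 * u ∧ (2 ≤ u → 2 * (nbS c S π i r).card ≤ 7 * u) := by
  have hSj : NH c S j := by have := hv j; rwa [hj] at this
  obtain ⟨s, hsR, hrs⟩ := h.nbr hr
  have hlt : (nbS c S π i r).card < S.card :=
    ((h.nbS_joined (r := r) (l := i)).swap hs).card_lt nbS_sub blk_sub ⟨r, h.self_mem hr⟩
  have hD : blk S π s ⊆ nbS c S π i r := by
    intro x hx
    rw [mem_blk] at hx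
    exact mem_nbS.2 ⟨hx.1, by rw [hx.2]; exact hrs⟩
  have vR := (hv.mono (nbS_sub (c := c) (π := π) (i := i) (r := r))).upd (i := i) (v := 0) hN
  by_cases hX : (nbS c S π i r \ blk S π s).Nonempty
  · have hc : (blk S π s).card + (nbS c S π i r \ blk S π s).card = (nbS c S π i r).card := by
      rw [add_comm]; exact Finset.card_sdiff_add_card_eq_card hD
    rw [hu, ← hc]
    refine joinH hs vR (by rw [Function.update_of_ne h.ne.symm, hj]) hD Finset.sdiff_subset
      ⟨s, h.self_mem hsR⟩ hX ?_ (IH _ (h.blk_lt hsR))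
      (IH _ (lt_of_le_of_lt (Finset.card_le_card Finset.sdiff_subset) hlt))
    intro x hx y hy
    have hxS := hD hx
    rw [mem_blk] at hx
    rw [Finset.mem_sdiff, mem_blk] at hy
    have hyS := nbS_sub hy.1
    have hne : π x ≠ π y := fun e => hy.2 ⟨hyS, by rw [← e, hx.2]⟩
    rcases h.two _ (h.mp x hx.1) _ (h.mp y hyS) hne with e | e
    · exact (hN x hxS y hy.1 (h.edge hx.1 hyS e)).elim
    · exact h.edge hx.1 hyS e
  · have hE : nbS c S π i r = blk S π s := by
      apply Finset.Subset.antisymm _ hD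
      rw [Finset.not_nonempty_iff_eq_empty, Finset.sdiff_eq_empty_iff_subset] at hX
      exact hX
    rw [hE] at vR ⊢
    have := IH _ (h.blk_lt hsR) _ (vR.upd (i := j) (v := 2) (h.swap.blk_np hs hsR hSj))
    obtain ⟨p, a, b, hM⟩ := MM_two t h.ne
    have u0 := hM 0 0
    have u2 := hM 0 2
    simp at u0 u2
    have := FF_p p a b
    omega

theorem Str.badblock (hs : ∀ x y, c x y = c y x) {S R : Finset V} {π : V → V} {i j : κ}
    (h : Str c S R π i j) {t : κ → ℕ} (hv : valid c S t) (hi : t i = 3) (hj : t j = 3)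
    (IH : ∀ T : Finset V, T.card < S.card → Bd c T) {r : V} (hr : r ∈ R)
    (hc : 3 ≤ (blk S π r).card) (hE : ¬ NE c (blk S π r) i) : S.card ≤ MM t := by
  have hSi : NH c S i := by have := hv i; rwa [hi] at this
  have hSj : NH c S j := by have := hv j; rwa [hj] at this
  obtain ⟨p, a, b, hM⟩ := MM_two t h.ne
  have u00 := hM 0 0
  have u22 := hM 2 2
  have u20 := hM 2 0
  have u10 := hM 1 0
  have u31 := hM (t i) 1
  have u33 := hM (t i) (t j)
  rw [Function.update_eq_self] at u31 u33
  rw [Function.update_eq_self] at u33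
  simp [hi, hj] at u00 u22 u20 u10 u31 u33
  have e1 := FF_a' p a b
  have e2 := FF_b' p (a + 1) b
  have e3 := FF_p p a b
  have e4 := FF_p (p + 1) a b
  have e5 := FF_b2 p a b
  have e6 := FF_pos p a b
  rw [u33, show b + 1 + 1 = b + 2 from rfl, e5]
  have hsum : S.card ≤ (blk S π r).card + (nbS c S π i r).card + (nbS c S π j r).card := by
    have : S ⊆ blk S π r ∪ nbS c S π i r ∪ nbS c S π j r := by
      intro x hx
      simp only [Finset.mem_union, mem_blk, mem_nbS]
      by_cases hxr : π x = r
      · exact Or.inl (Or.inl ⟨hx, hxr⟩)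
      · rcases h.two r hr _ (h.mp x hx) (Ne.symm hxr) with e | e
        · exact Or.inl (Or.inr ⟨hx, e⟩)
        · exact Or.inr ⟨hx, e⟩
    refine (Finset.card_le_card this).trans ((Finset.card_union_le _ _).trans ?_)
    have := Finset.card_union_le (blk S π r) (nbS c S π i r)
    omega
  have bI := IH _ (h.blk_lt hr)
  have vI := hv.mono (blk_sub (S := S) (π := π) (r := r))
  have Ji := h.nbS_joined (r := r) (l := i)
  have Jj := h.nbS_joined (r := r) (l := j)
  have b1 := h.nbS_bound hs hv hj IH hr (Ji.ne_other blk_sub nbS_sub hc hs hSi hE) u00.symm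
  by_cases hEj : NE c (blk S π r) j
  · have hlt : (nbS c S π j r).card < S.card :=
      (Jj.swap hs).card_lt nbS_sub blk_sub ⟨r, h.self_mem hr⟩
    have b2 := IH _ hlt _ ((hv.mono nbS_sub).upd (i := j) (v := 1)
      ((Jj.swap hs).nt nbS_sub blk_sub (by omega) hs hSj))
    by_cases hT : NT c (blk S π r) i
    · have b3 := bI _ ((vI.upd (i := i) (v := 1) hT).upd (i := j) (v := 0) hEj)
      by_cases hu : 2 ≤ FF p a b
      · have := b1.2 hu
        omega
      · omega
    · have b3 := bI _ ((vI.upd (i := i) (v := 2) (h.blk_np hs hr hSi)).upd (i := j) (v := 0) hEj)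
      have b4 : ¬ 2 ≤ (nbS c S π i r).card := fun h2 => hT (Ji.nt blk_sub nbS_sub h2 hs hSi)
      omega
  · have b2 := h.swap.nbS_bound hs hv hi IH hr (Jj.ne_other blk_sub nbS_sub hc hs hSj hEj)
      (u := FF p a b) (by rw [← u00, Function.update_comm h.ne])
    have b3 := bI _ ((vI.upd (i := i) (v := 2) (h.blk_np hs hr hSi)).upd (i := j) (v := 2)
      (h.swap.blk_np hs hr hSj))
    omega

/-- both colors of type `H` -/
theorem Str.case33 (hs : ∀ x y, c x y = c y x) {S R : Finset V} {π : V → V} {i j : κ}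
    (h : Str c S R π i j) {t : κ → ℕ} (hv : valid c S t) (hi : t i = 3) (hj : t j = 3)
    (IH : ∀ T : Finset V, T.card < S.card → Bd c T) : S.card ≤ MM t := by
  by_cases hb : ∃ r ∈ R, 3 ≤ (blk S π r).card ∧ ¬ NE c (blk S π r) i
  · obtain ⟨r, hr, hc, hE⟩ := hb
    exact h.badblock hs hv hi hj IH hr hc hE
  by_cases hb' : ∃ r ∈ R, 3 ≤ (blk S π r).card ∧ ¬ NE c (blk S π r) j
  · obtain ⟨r, hr, hc, hE⟩ := hb'
    exact h.swap.badblock hs hv hj hi IH hr hc hE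
  push Not at hb hb'
  have hSi : NH c S i := by have := hv i; rwa [hi] at this
  have hSj : NH c S j := by have := hv j; rwa [hj] at this
  obtain ⟨p, a, b, hM⟩ := MM_two t h.ne
  have u00 := hM 0 0
  have u33 := hM (t i) (t j)
  rw [Function.update_eq_self, Function.update_eq_self] at u33
  simp [hi, hj] at u00 u33
  have e5 := FF_b2 p a b
  have e6 := FF_pos p a b
  rw [u33, show b + 1 + 1 = b + 2 from rfl, e5]
  have := h.collect 1 (FF p a b) 17 (by
    intro r hr
    by_cases hE : NE c (blk S π r) i ∧ NE c (blk S π r) j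
    · refine ⟨{r}, by simpa using h.self_mem hr, two_singleton c r i j, ?_⟩
      have := IH _ (h.blk_lt hr) _ (((hv.mono blk_sub).upd (i := i) (v := 0) hE.1).upd
        (i := j) (v := 0) hE.2)
      simp
      omega
    · have h3 : (blk S π r).card ≤ 2 := by
        by_contra hc
        exact hE ⟨hb r hr (by omega), hb' r hr (by omega)⟩
      obtain ⟨x, hx, y, hy, hxy⟩ : ∃ x ∈ blk S π r, ∃ y ∈ blk S π r, E c i x y ∨ E c j x y := by
        by_cases hEi : NE c (blk S π r) i
        · obtain ⟨x, hx, y, hy, e⟩ := exists_edge (fun hEj => hE ⟨hEi, hEj⟩)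
          exact ⟨x, hx, y, hy, Or.inr e⟩
        · obtain ⟨x, hx, y, hy, e⟩ := exists_edge hEi
          exact ⟨x, hx, y, hy, Or.inl e⟩
      refine ⟨{x, y}, ?_, two_pair hs hxy, ?_⟩
      · simp [Finset.insert_subset_iff, hx, hy]
      · rw [Finset.card_pair (hxy.elim (fun e => e.1) (fun e => e.1))]
        omega) (fun K hK h2 => RHH hs h.ne h2 (hSi.mono hK) (hSj.mono hK))
  omega

theorem Str.norm (hs : ∀ x y, c x y = c y x) {S R : Finset V} {π : V → V} {i j : κ}
    (h : Str c S R π i j) {t : κ → ℕ} (hv : valid c S t) :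
    ∃ t', valid c S t' ∧ MM t' ≤ MM t ∧ (t' i = 1 ∨ t' i = 3) ∧ t' j = t j := by
  have hvi := hv i
  rcases ht : t i with _ | _ | _ | _ | m
  · rw [ht] at hvi
    obtain ⟨r, hr⟩ : R.Nonempty := Finset.card_pos.1 (by have := h.two_le; omega)
    obtain ⟨s, hs', hrs⟩ := h.nbr hr
    exact (hvi r (h.sub hr) s (h.sub hs') hrs).elim
  · exact ⟨t, hv, le_rfl, Or.inl ht, rfl⟩
  · rw [ht] at hvi
    have hP : NP c S i := hvi
    have hT : NT c S i := by
      intro x hx y hy z hz xy xz yz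
      let X : Finset V := {π x, π y, π z}
      have hXR : X ⊆ R := by
        simp [X, Finset.insert_subset_iff, h.mp x hx, h.mp y hy, h.mp z hz]
      by_cases hX : (R \ X).Nonempty
      · obtain ⟨u, hu, w, hw, huw⟩ := h.ci X hXR ⟨π x, by simp [X]⟩ hX
        rw [Finset.mem_sdiff] at hw
        have hwS := h.sub hw.1
        have hwf := h.fix w hw.1
        simp only [X, Finset.mem_insert, Finset.mem_singleton, not_or] at hu hw
        have nx : w ≠ x := fun e => hw.2.1 (by rw [← e, hwf])
        have ny : w ≠ y := fun e => hw.2.2.1 (by rw [← e, hwf])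
        have nz : w ≠ z := fun e => hw.2.2.2 (by rw [← e, hwf])
        rcases hu with rfl | rfl | rfl
        · exact hP x hx y hy z hz w hwS xy xz yz (h.edge hx hwS (by rwa [hwf])) ny nz
        · exact hP y hy x hx z hz w hwS (xy.symm' hs) yz xz (h.edge hy hwS (by rwa [hwf])) nx nz
        · exact hP z hz x hx y hy w hwS (xz.symm' hs) (yz.symm' hs) xy
            (h.edge hz hwS (by rwa [hwf])) nx ny
      · have hRX : R ⊆ X := by
          rw [Finset.not_nonempty_iff_eq_empty, Finset.sdiff_eq_empty_iff_subset] at hX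
          exact hX
        have red : ∀ u ∈ S, ∀ v ∈ S, E c i u v → ¬ E c j (π u) (π v) := fun u hu v hv e e' =>
          h.ne (e.2.symm.trans (h.edge hu hv e').2)
        obtain ⟨s, hs', hrs⟩ := h.swap.nbr (h.mp x hx)
        have hsX := hRX hs'
        simp only [X, Finset.mem_insert, Finset.mem_singleton] at hsX
        rcases hsX with rfl | rfl | rfl
        · exact hrs.1 rfl
        · exact red x hx y hy xy hrs
        · exact red x hx z hz xz hrs
    refine ⟨Function.update t i 1, hv.upd (i := i) (v := 1) hT, ?_, Or.inl (by simp),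
      Function.update_of_ne h.ne.symm _ _⟩
    obtain ⟨p, a, b, hM⟩ := MM_one t i
    have u1 := hM 1
    have u2 := hM (t i)
    rw [Function.update_eq_self] at u2
    simp [ht] at u1 u2
    have := FF_a' p a b
    have := FF_p p a b
    omega
  · exact ⟨t, hv, le_rfl, Or.inr ht, rfl⟩
  · rw [ht] at hvi
    exact hvi.elim

theorem join_case (hs : ∀ x y, c x y = c y x) {S A B : Finset V} {i : κ} (hJ : Join c S A B i)
    {t : κ → ℕ} (hv : valid c S t)
    (IH : ∀ T : Finset V, T.card < S.card → Bd c T) : S.card ≤ MM t := by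
  obtain ⟨hAn, hBn, hU, hE⟩ := hJ
  have hA : A ⊆ S := hU ▸ Finset.subset_union_left
  have hB : B ⊆ S := hU ▸ Finset.subset_union_right
  have hJ : JJ c A B i := hE
  have hJ' := hJ.swap hs
  have bA := IH _ (hJ.card_lt hA hB hBn)
  have bB := IH _ (hJ'.card_lt hB hA hAn)
  have hcard : S.card ≤ A.card + B.card := hU ▸ Finset.card_union_le A B
  have hvi := hv i
  obtain ⟨p, a, b, hM⟩ := MM_one t i
  have u0 := hM 0
  have ut := hM (t i)
  rw [Function.update_eq_self] at ut
  have hNT : NT c S i → S.card ≤ 2 * MM (Function.update t i 0) := by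
    intro hT
    have := bA _ ((hv.mono hA).upd (i := i) (v := 0) (hJ.ne hA hB hBn hs hT))
    have := bB _ ((hv.mono hB).upd (i := i) (v := 0) (hJ'.ne hB hA hAn hs hT))
    omega
  have e1 := FF_pos p a b
  have e2 := FF_p p a b
  have e3 := FF_a p a b
  have e4 := FF_b p a b
  rcases ht : t i with _ | _ | _ | _ | m
  · rw [ht] at hvi
    obtain ⟨x, hx⟩ := hAn
    obtain ⟨y, hy⟩ := hBn
    exact (hvi x (hA hx) y (hB hy) (hE x hx y hy)).elim
  · rw [ht] at hvi
    have := hNT hvi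
    simp [ht] at u0 ut
    omega
  · rw [ht] at hvi
    have hP : NP c S i := hvi
    simp [ht] at u0 ut
    by_cases hT : NT c S i
    · have := hNT hT
      omega
    · obtain ⟨x, hx, y, hy, z, hz, xy, xz, yz⟩ := exists_tri hT
      have h3 : S.card ≤ 3 := by
        have hsub : S ⊆ {x, y, z} := by
          intro w hw
          by_contra hn
          simp only [Finset.mem_insert, Finset.mem_singleton, not_or] at hn
          have key : ∀ w ∈ S, w ≠ x → w ≠ y → w ≠ z → ∀ q, q = x ∨ q = y ∨ q = z →
              ¬ E c i q w := by
            intro w hw n1 n2 n3 q hq hqw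
            rcases hq with rfl | rfl | rfl
            · exact hP q hx y hy z hz w hw xy xz yz hqw n2 n3
            · exact hP q hy x hx z hz w hw (xy.symm' hs) yz xz hqw n1 n3
            · exact hP q hz x hx y hy w hw (xz.symm' hs) (yz.symm' hs) xy hqw n1 n2
          have side : ∀ A B : Finset V, A ⊆ S → B ⊆ S → B.Nonempty → JJ c A B i → A ∪ B = S →
              w ∈ A → False := by
            intro A B hA hB hBn hJ hU hwA
            have nB : ∀ q, q = x ∨ q = y ∨ q = z → q ∈ S → q ∉ B := fun q hq _ hqB =>
              key w hw hn.1 hn.2.1 hn.2.2 q hq ((hJ w hwA q hqB).symm' hs)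
            obtain ⟨w', hw'⟩ := hBn
            have inA : x ∈ A := by
              have : x ∈ A ∪ B := by rw [hU]; exact hx
              exact (Finset.mem_union.1 this).resolve_right (nB x (by simp) hx)
            exact key w' (hB hw') (fun e => nB x (by simp) hx (e ▸ hw'))
              (fun e => nB y (by simp) hy (e ▸ hw')) (fun e => nB z (by simp) hz (e ▸ hw'))
              x (by simp) (hJ x inA w' hw')
          have hwU : w ∈ A ∪ B := by rw [hU]; exact hw
          rcases Finset.mem_union.1 hwU with h | h
          · exact side A B hA hB hBn hJ hU h
          · exact side B A hB hA hAn hJ' (by rw [Finset.union_comm, hU]) h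
        exact (Finset.card_le_card hsub).trans Finset.card_le_three
      omega
  · simp [ht] at u0 ut
    have := (joinH hs hv ht hA hB hAn hBn hJ bA bB).1
    omega
  · rw [ht] at hvi
    exact hvi.elim

theorem upper (hs : ∀ x y, c x y = c y x) (hg : Gal c) : ∀ n : ℕ, ∀ S : Finset V, S.card = n →
    Bd c S := by
  intro n
  induction n using Nat.strong_induction_on with
  | _ n ih =>
  intro S hS t hv
  have IH : ∀ T : Finset V, T.card < S.card → Bd c T := fun T hT => ih _ (hS ▸ hT) T rfl
  by_cases h2 : 2 ≤ S.card
  · rcases gallai_dich hs hg h2 with ⟨A, B, i, hJ⟩ | ⟨R, π, i, j, g1, g2, g3, g4, g5, g6, g7, g8, g9⟩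
    · exact join_case hs hJ hv IH
    · have h : Str c S R π i j := ⟨g1, g2, g3, g4, g5, g6, g7, g8, g9⟩
      obtain ⟨t1, v1, m1, k1, -⟩ := h.norm hs hv
      obtain ⟨t2, v2, m2, k2, e2⟩ := h.swap.norm hs v1
      rw [← e2] at k1
      refine le_trans ?_ (m2.trans m1)
      rcases k1 with k1 | k1 <;> rcases k2 with k2 | k2
      · exact h.case11 hs v2 k1 k2 IH
      · exact h.case13 hs v2 k1 k2 IH
      · exact h.swap.case13 hs v2 k2 k1 IH
      · exact h.case33 hs v2 k1 k2 IH
  · have := MM_pos t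
    omega

end main
section lower

def LB {k : ℕ} (r : ℕ) (C : Set (Fin k)) (N : ℕ) : Prop :=
  ∃ (V : Type) (_ : Fintype V) (c : V → V → Fin k), Fintype.card V = N ∧
    (∀ x y, c x y = c y x) ∧ (∀ x y, x ≠ y → c x y ∈ C) ∧ Gal c ∧
    (∀ i : Fin k, r ≤ (i : ℕ) → NT c Finset.univ i) ∧
    (∀ i : Fin k, (i : ℕ) < r → NK c Finset.univ i)

open Classical in
theorem LB.prod {k r : ℕ} {C D : Set (Fin k)} {M N : ℕ} (h1 : LB r C M) (h2 : LB r D N)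
    (hd : ∀ i, i ∈ C → i ∈ D → False) : LB r (C ∪ D) (M * N) := by
  obtain ⟨V, _, c, hV, cs, cC, cg, ct, ck⟩ := h1
  obtain ⟨W, _, d, hW, ds, dD, dg, dt, dk⟩ := h2
  let e : V × W → V × W → Fin k := fun u v => if u.1 = v.1 then d u.2 v.2 else c u.1 v.1
  have key : ∀ i, (∀ u v, E e i u v → E c i u.1 v.1) ∨ (∀ u v, E e i u v → E d i u.2 v.2) := by
    intro i
    by_cases hi : i ∈ C
    · left
      intro u v ⟨h, h'⟩
      by_cases huv : u.1 = v.1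
      · have h2 : u.2 ≠ v.2 := fun h2 => h (Prod.ext huv h2)
        simp only [e, huv, if_true] at h'
        exact (hd i hi (h' ▸ dD _ _ h2)).elim
      · simp only [e, huv, if_false] at h'
        exact ⟨huv, h'⟩
    · right
      intro u v ⟨h, h'⟩
      by_cases huv : u.1 = v.1
      · have h2 : u.2 ≠ v.2 := fun h2 => h (Prod.ext huv h2)
        simp only [e, huv, if_true] at h'
        exact ⟨h2, h'⟩
      · simp only [e, huv, if_false] at h'
        exact (hi (h' ▸ cC _ _ huv)).elim
  refine ⟨V × W, inferInstance, e, by rw [Fintype.card_prod, hV, hW], ?_, ?_, ?_, ?_, ?_⟩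
  · intro u v
    by_cases huv : u.1 = v.1
    · simp only [e, huv, if_true]; exact ds _ _
    · have huv' : ¬ v.1 = u.1 := fun h => huv h.symm
      simp only [e, huv, huv', if_false]; exact cs _ _
  · intro u v h
    by_cases huv : u.1 = v.1
    · have h2 : u.2 ≠ v.2 := fun h2 => h (Prod.ext huv h2)
      simp only [e, huv, if_true]; exact Or.inr (dD _ _ h2)
    · simp only [e, huv, if_false]; exact Or.inl (cC _ _ huv)
  · rintro ⟨x, x'⟩ ⟨y, y'⟩ ⟨z, z'⟩ hxy hxz hyz
    simp only [e]
    by_cases h1 : x = y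
    · by_cases h2 : x = z
      · subst h1; subst h2
        simp at hxy hxz hyz
        simpa using dg x' y' z' hxy hxz hyz
      · subst h1
        simp [h2]
    · by_cases h2 : x = z
      · subst h2
        simp [h1, Ne.symm h1, cs x y]
      · by_cases h3 : y = z
        · subst h3
          simp [h1]
        · simpa [h1, h2, h3] using cg x y z h1 h2 h3
  · intro i hi x _ y _ z _ h1 h2 h3
    rcases key i with h | h
    · exact ct i hi _ (Finset.mem_univ _) _ (Finset.mem_univ _) _ (Finset.mem_univ _)
        (h _ _ h1) (h _ _ h2) (h _ _ h3)
    · exact dt i hi _ (Finset.mem_univ _) _ (Finset.mem_univ _) _ (Finset.mem_univ _)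
        (h _ _ h1) (h _ _ h2) (h _ _ h3)
  · intro i hi a _ b _ p _ q _ h1 h2 h3 h4 h5 h6
    rcases key i with h | h
    · exact ck i hi _ (Finset.mem_univ _) _ (Finset.mem_univ _) _ (Finset.mem_univ _) _
        (Finset.mem_univ _) (h _ _ h1) (h _ _ h2) (h _ _ h3) (h _ _ h4) (h _ _ h5) (h _ _ h6)
    · exact dk i hi _ (Finset.mem_univ _) _ (Finset.mem_univ _) _ (Finset.mem_univ _) _
        (Finset.mem_univ _) (h _ _ h1) (h _ _ h2) (h _ _ h3) (h _ _ h4) (h _ _ h5) (h _ _ h6)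

def TF {n : ℕ} (d : Fin n → Fin n → Bool) (b : Bool) : Prop :=
  ∀ x y, x ≠ y → d x y = b → ∀ z, x ≠ z → d x z = b → y ≠ z → d y z = b → False
def KF {n : ℕ} (d : Fin n → Fin n → Bool) (b : Bool) : Prop :=
  ∀ x y, x ≠ y → d x y = b → ∀ z, x ≠ z → d x z = b → y ≠ z → d y z = b →
    ∀ w, x ≠ w → d x w = b → y ≠ w → d y w = b → z ≠ w → d z w = b → False

instance {n : ℕ} (d : Fin n → Fin n → Bool) (b : Bool) : Decidable (TF d b) := by
  unfold TF; infer_instance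
instance {n : ℕ} (d : Fin n → Fin n → Bool) (b : Bool) : Decidable (KF d b) := by
  unfold KF; infer_instance

theorem LB.base {k r n : ℕ} (d : Fin n → Fin n → Bool) (i j : Fin k) (hij : i ≠ j)
    (ds : ∀ x y, d x y = d y x)
    (hi : (r ≤ (i : ℕ) ∧ TF d true) ∨ ((i : ℕ) < r ∧ KF d true))
    (hj : (r ≤ (j : ℕ) ∧ TF d false) ∨ ((j : ℕ) < r ∧ KF d false)) :
    LB r ({i, j} : Set (Fin k)) n := by
  let c : Fin n → Fin n → Fin k := fun x y => if d x y = true then i else j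
  have ei : ∀ x y, c x y = i → d x y = true := by
    intro x y h
    by_contra h'
    simp only [c, h', if_false] at h
    exact hij h.symm
  have ej : ∀ x y, c x y = j → d x y = false := by
    intro x y h
    by_contra h'
    have h' : d x y = true := by simpa using h'
    simp only [c, h', if_true] at h
    exact hij h
  have eo : ∀ x y, c x y = i ∨ c x y = j := by
    intro x y
    simp only [c]
    split_ifs <;> simp
  refine ⟨Fin n, inferInstance, c, by simp, ?_, ?_, ?_, ?_, ?_⟩
  · intro x y; simp only [c, ds x y]
  · intro x y _; simpa using eo x y
  · intro x y z _ _ _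
    have := eo x y
    have := eo x z
    have := eo y z
    grind
  · intro l hl x _ y _ z _ h1 h2 h3
    rcases eo x y with h | h
    · have : l = i := h1.2.symm.trans h
      subst this
      rcases hi with hi | hi
      · exact hi.2 x y h1.1 (ei _ _ h1.2) z h2.1 (ei _ _ h2.2) h3.1 (ei _ _ h3.2)
      · omega
    · have : l = j := h1.2.symm.trans h
      subst this
      rcases hj with hj | hj
      · exact hj.2 x y h1.1 (ej _ _ h1.2) z h2.1 (ej _ _ h2.2) h3.1 (ej _ _ h3.2)
      · omega
  · intro l hl a _ b _ p _ q _ h1 h2 h3 h4 h5 h6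
    rcases eo a b with h | h
    · have : l = i := h1.2.symm.trans h
      subst this
      rcases hi with hi | hi
      · omega
      · exact hi.2 a b h1.1 (ei _ _ h1.2) p h2.1 (ei _ _ h2.2) h4.1 (ei _ _ h4.2) q h3.1
          (ei _ _ h3.2) h5.1 (ei _ _ h5.2) h6.1 (ei _ _ h6.2)
    · have : l = j := h1.2.symm.trans h
      subst this
      rcases hj with hj | hj
      · omega
      · exact hj.2 a b h1.1 (ej _ _ h1.2) p h2.1 (ej _ _ h2.2) h4.1 (ej _ _ h4.2) q h3.1
          (ej _ _ h3.2) h5.1 (ej _ _ h5.2) h6.1 (ej _ _ h6.2)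

def d5 (x y : Fin 5) : Bool := decide ((x - y).val ∈ [1, 4])
def d8 (x y : Fin 8) : Bool := decide ((x - y).val ∈ [1, 4, 7])
def d17 (x y : Fin 17) : Bool := decide ((x - y).val ∈ [1, 2, 4, 8, 9, 13, 15, 16])

theorem d5s : ∀ x y, d5 x y = d5 y x := by decide +kernel
theorem d8s : ∀ x y, d8 x y = d8 y x := by decide +kernel
theorem d17s : ∀ x y, d17 x y = d17 y x := by decide +kernel
theorem d5t : TF d5 true := by decide +kernel
theorem d5f : TF d5 false := by decide +kernel
theorem d8t : TF d8 true := by decide +kernel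
theorem d8f : KF d8 false := by decide +kernel
theorem d17_shift (u x y : Fin 17) : d17 x y = d17 (x - u) (y - u) := by
  unfold d17
  rw [sub_sub_sub_cancel_right]

/-- by translation invariance, it suffices to exclude a `K₄` containing the vertex `0` -/
def K0 (b : Bool) : Prop :=
  ∀ y, (0 : Fin 17) ≠ y → d17 0 y = b → ∀ z, 0 ≠ z → d17 0 z = b → y ≠ z → d17 y z = b →
    ∀ w, 0 ≠ w → d17 0 w = b → y ≠ w → d17 y w = b → z ≠ w → d17 z w = b → False

instance (b : Bool) : Decidable (K0 b) := by
  unfold K0; infer_instance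

theorem K0.kf {b : Bool} (h : K0 b) : KF d17 b := by
  intro x y xy cxy z xz cxz yz cyz w xw cxw yw cyw zw czw
  rw [d17_shift x] at cxy cxz cyz cxw cyw czw
  rw [sub_self] at cxy cxz cxw
  have hz : ∀ u, x ≠ u → 0 ≠ u - x := fun u hu e => hu (sub_eq_zero.1 e.symm).symm
  have hn : ∀ u v, u ≠ v → u - x ≠ v - x := fun u v huv e => huv (sub_left_injective e)
  exact h (y - x) (hz _ xy) cxy (z - x) (hz _ xz) cxz (hn _ _ yz) cyz (w - x) (hz _ xw) cxw
    (hn _ _ yw) cyw (hn _ _ zw) czw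

theorem d17t : KF d17 true := K0.kf (by decide +kernel)
theorem d17f : KF d17 false := K0.kf (by decide +kernel)

theorem LB.eq {k r N : ℕ} {C D : Set (Fin k)} (h : LB r C N) (e : C = D) : LB r D N := e ▸ h

def CC (k r a b : ℕ) : Set (Fin k) := {i | r ≤ (i : ℕ) + a ∧ (i : ℕ) < r + b}

theorem LB_all {k r : ℕ} (a : ℕ) (b : ℕ) (ha : 2 * a + 1 ≤ r) (hb : r + (2 * b + 1) ≤ k) :
    LB r (CC k r (2 * a + 1) (2 * b + 1)) (8 * 5 ^ b * 17 ^ a) := by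
  induction a with
  | zero =>
    induction b with
    | zero =>
      refine (LB.base (r := r) d8 (⟨r, by omega⟩ : Fin k) ⟨r - 1, by omega⟩ ?_ d8s
        (Or.inl ⟨le_rfl, d8t⟩) (Or.inr ⟨by simp only; omega, d8f⟩)).eq ?_
      · intro h; have := congrArg Fin.val h; simp only at this; omega
      · ext x; simp only [CC, Set.mem_insert_iff, Set.mem_singleton_iff, Set.mem_ofPred_eq,
          Fin.ext_iff]; omega
    | succ b ih =>
      have h1 := ih (by omega)
      have h2 := LB.base (r := r) d5 (⟨r + (2 * b + 1), by omega⟩ : Fin k)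
        ⟨r + (2 * b + 2), by omega⟩
        (by intro h; have := congrArg Fin.val h; simp only at this; omega) d5s
        (Or.inl ⟨by simp only; omega, d5t⟩) (Or.inl ⟨by simp only; omega, d5f⟩)
      have h3 := (h1.prod h2 (by
        intro i hi hi'
        simp only [CC, Set.mem_insert_iff, Set.mem_singleton_iff, Set.mem_ofPred_eq,
          Fin.ext_iff] at hi hi'
        omega)).eq (D := CC k r (2 * 0 + 1) (2 * (b + 1) + 1)) (by
        ext x
        simp only [CC, Set.mem_union, Set.mem_insert_iff, Set.mem_singleton_iff,
          Set.mem_ofPred_eq, Fin.ext_iff]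
        omega)
      have e : 8 * 5 ^ b * 17 ^ 0 * 5 = 8 * 5 ^ (b + 1) * 17 ^ 0 := by ring
      rwa [e] at h3
  | succ a ih =>
    have h1 := ih (by omega)
    have h2 := LB.base (r := r) d17 (⟨r - (2 * a + 2), by omega⟩ : Fin k)
      ⟨r - (2 * a + 3), by omega⟩
      (by intro h; have := congrArg Fin.val h; simp only at this; omega) d17s
      (Or.inr ⟨by simp only; omega, d17t⟩) (Or.inr ⟨by simp only; omega, d17f⟩)
    have h3 := (h1.prod h2 (by
      intro i hi hi'
      simp only [CC, Set.mem_insert_iff, Set.mem_singleton_iff, Set.mem_ofPred_eq,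
        Fin.ext_iff] at hi hi'
      omega)).eq (D := CC k r (2 * (a + 1) + 1) (2 * b + 1)) (by
      ext x
      simp only [CC, Set.mem_union, Set.mem_insert_iff, Set.mem_singleton_iff,
        Set.mem_ofPred_eq, Fin.ext_iff]
      omega)
    have e : 8 * 5 ^ b * 17 ^ a * 17 = 8 * 5 ^ b * 17 ^ (a + 1) := by ring
    rwa [e] at h3

theorem gg_odd (m : ℕ) : gg (2 * m + 1) = 2 * 5 ^ m := by
  induction m with
  | zero => rfl
  | succ m ih => rw [show 2 * (m + 1) + 1 = 2 * m + 1 + 2 by ring, gg, ih]; ring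
theorem hh_odd (m : ℕ) : hh (2 * m + 1) = 4 * 17 ^ m := by
  induction m with
  | zero => rfl
  | succ m ih => rw [show 2 * (m + 1) + 1 = 2 * m + 1 + 2 by ring, hh, ih]; ring

theorem MM_t {k r : ℕ} (hr : r ≤ k) :
    MM (fun i : Fin k => if (i : ℕ) < r then 3 else 1) = gg (k - r) * hh r := by
  have c2 : cnt (fun i : Fin k => if (i : ℕ) < r then 3 else 1) 2 = 0 := by
    unfold cnt
    rw [Finset.card_eq_zero, Finset.filter_eq_empty_iff]
    intro i _
    show ¬ (if (i : ℕ) < r then 3 else 1) = 2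
    split_ifs <;> simp
  have c3 : cnt (fun i : Fin k => if (i : ℕ) < r then 3 else 1) 3 = r := by
    unfold cnt
    have : (Finset.univ.filter fun i : Fin k => (if (i : ℕ) < r then 3 else 1) = 3)
        = Finset.univ.filter fun i : Fin k => (i : ℕ) < r := by
      ext i; simp
    rw [this, Fin.card_filter_val_lt, min_eq_right hr]
  have c1 : cnt (fun i : Fin k => if (i : ℕ) < r then 3 else 1) 1 = k - r := by
    unfold cnt
    have : (Finset.univ.filter fun i : Fin k => (if (i : ℕ) < r then 3 else 1) = 1)
        = (Finset.univ.filter fun i : Fin k => (i : ℕ) < r)ᶜ := by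
      ext i; simp
    rw [this, Finset.card_compl, Fin.card_filter_val_lt, min_eq_right hr, Fintype.card_fin]
  unfold MM
  rw [c1, c2, c3]
  simp [FF]

end lower

theorem adjH1 {V : Type} {P : V → V → Prop} (hP : ∀ x y, P x y → P y x) {a b p q w : V}
    (h1 : P a b) (h2 : P a p) (h3 : P a q) (h4 : P b p) (h5 : P b q) (h6 : P p q) (h7 : P a w) :
    ∀ x y : Fin 5, GH1.Adj x y → P (![b, p, q, a, w] x) (![b, p, q, a, w] y) := by
  intro x y h
  fin_cases x <;> fin_cases y <;> simp [GH1] at h ⊢ <;> first | assumption | (apply hP; assumption)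

theorem adjH2 {V : Type} {P : V → V → Prop} (hP : ∀ x y, P x y → P y x) {a b p q w : V}
    (h1 : P a b) (h2 : P a p) (h3 : P a q) (h4 : P b p) (h5 : P b q) (h6 : P p q) (h7 : P a w)
    (h8 : P b w) :
    ∀ x y : Fin 5, GH2.Adj x y → P (![p, w, q, a, b] x) (![p, w, q, a, b] y) := by
  intro x y h
  fin_cases x <;> fin_cases y <;> simp [GH2] at h ⊢ <;> first | assumption | (apply hP; assumption)

theorem inj5 {V : Type} {a b c d e : V} (h1 : a ≠ b) (h2 : a ≠ c) (h3 : a ≠ d) (h4 : a ≠ e)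
    (h5 : b ≠ c) (h6 : b ≠ d) (h7 : b ≠ e) (h8 : c ≠ d) (h9 : c ≠ e) (h10 : d ≠ e) :
    Function.Injective ![a, b, c, d, e] := by
  intro x y h
  fin_cases x <;> fin_cases y <;> simp at h ⊢ <;> grind

theorem inj3 {V : Type} {a b c : V} (h1 : a ≠ b) (h2 : a ≠ c) (h5 : b ≠ c) :
    Function.Injective ![a, b, c] := by
  intro x y h
  fin_cases x <;> fin_cases y <;> simp at h ⊢ <;> grind

theorem copyH {n k : ℕ} {c : Fin n → Fin n → Fin k} (hs : ∀ x y, c x y = c y x)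
    {H : SimpleGraph (Fin 5)} (hH : H = GH1 ∨ H = GH2) {i : Fin k}
    (hn : ¬ HasMonoCopy H c i) : NH c Finset.univ i := by
  intro a _ b _ p _ q _ w _ ab ap aq bp bq pq aw bw wp wq
  apply hn
  rcases hH with rfl | rfl
  · exact ⟨![b, p, q, a, w], inj5 bp.1 bq.1 ab.1.symm bw.1 pq.1 ap.1.symm wp.symm aq.1.symm
      wq.symm aw.1, fun x y h => (adjH1 (P := E c i) (fun x y h => h.symm' hs)
      ab ap aq bp bq pq aw x y h).2⟩
  · exact ⟨![p, w, q, a, b], inj5 wp.symm pq.1 ap.1.symm bp.1.symm wq aw.1.symm bw.1.symm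
      aq.1.symm bq.1.symm ab.1, fun x y h => (adjH2 (P := E c i) (fun x y h => h.symm' hs)
      ab ap aq bp bq pq aw bw x y h).2⟩

theorem copyT {n k : ℕ} {c : Fin n → Fin n → Fin k} (hs : ∀ x y, c x y = c y x) {i : Fin k}
    (hn : ¬ HasMonoCopy GK3 c i) : NT c Finset.univ i := by
  intro x _ y _ z _ xy xz yz
  apply hn
  refine ⟨![x, y, z], inj3 xy.1 xz.1 yz.1, fun u v h => ?_⟩
  have h1 := xy.symm' hs
  have h2 := xz.symm' hs
  have h3 := yz.symm' hs
  have : E c i (![x, y, z] u) (![x, y, z] v) := by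
    fin_cases u <;> fin_cases v <;> simp [GK3] at h ⊢ <;> assumption
  exact this.2

theorem noH {V : Type} [Fintype V] {n k : ℕ} {c : V → V → Fin k} {g : Fin n → V}
    (hg : Function.Injective g)
    {H : SimpleGraph (Fin 5)} (hH : H = GH1 ∨ H = GH2) {i : Fin k}
    (hn : NK c Finset.univ i) : ¬ HasMonoCopy H (fun x y => c (g x) (g y)) i := by
  rintro ⟨f, hf, hc⟩
  have key : ∀ x y, x ≠ y → H.Adj x y → E c i (g (f x)) (g (f y)) := fun x y hxy h =>
    ⟨fun e => hxy (hf (hg e)), hc x y h⟩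
  rcases hH with rfl | rfl
  · refine hn (g (f 0)) (Finset.mem_univ _) (g (f 1)) (Finset.mem_univ _) (g (f 2))
      (Finset.mem_univ _) (g (f 3)) (Finset.mem_univ _) ?_ ?_ ?_ ?_ ?_ ?_ <;>
    exact key _ _ (by decide) (by simp [GH1])
  · refine hn (g (f 0)) (Finset.mem_univ _) (g (f 2)) (Finset.mem_univ _) (g (f 3))
      (Finset.mem_univ _) (g (f 4)) (Finset.mem_univ _) ?_ ?_ ?_ ?_ ?_ ?_ <;>
    exact key _ _ (by decide) (by simp [GH2])

theorem noT {V : Type} [Fintype V] {n k : ℕ} {c : V → V → Fin k} {g : Fin n → V}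
    (hg : Function.Injective g) {i : Fin k}
    (hn : NT c Finset.univ i) : ¬ HasMonoCopy GK3 (fun x y => c (g x) (g y)) i := by
  rintro ⟨f, hf, hc⟩
  have key : ∀ x y, x ≠ y → E c i (g (f x)) (g (f y)) := fun x y hxy =>
    ⟨fun e => hxy (hf (hg e)), hc x y (by simpa [GK3] using hxy)⟩
  exact hn (g (f 0)) (Finset.mem_univ _) (g (f 1)) (Finset.mem_univ _) (g (f 2))
      (Finset.mem_univ _) (key _ _ (by decide)) (key _ _ (by decide)) (key _ _ (by decide))

end GRam

open GRam in
/-- Theorem 1.4, case (a₃): for H ∈ {H₁, H₂}, k ≥ 1, 0 ≤ r ≤ k with k - r and r both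
odd, GR_k((k-r)K₃, rH) = 8·5^((k-r-1)/2)·17^((r-1)/2) + 1. -/
theorem GR_mixKH_odd_odd (H : SimpleGraph (Fin 5)) (hH : H = GH1 ∨ H = GH2)
    (k r : ℕ) (hk : 1 ≤ k) (hr : r ≤ k) (h1 : Odd (k - r)) (h2 : Odd r) :
    GR k (mixKH k r H) = 8 * 5 ^ ((k - r - 1) / 2) * 17 ^ ((r - 1) / 2) + 1 := by
  obtain ⟨b, hb⟩ := h1
  obtain ⟨a, ha⟩ := h2
  rw [show (k - r - 1) / 2 = b by omega, show (r - 1) / 2 = a by omega]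
  have mem : 8 * 5 ^ b * 17 ^ a + 1 ∈ {n : ℕ | ∀ c : Fin n → Fin n → Fin k,
      IsGallaiColoring c → ∃ i : Fin k, HasMonoCopy (mixKH k r H i).2 c i} := by
    intro c hc
    by_contra hno
    have hG : Gal c := by
      intro x y z hxy hxz hyz
      by_contra h
      simp only [not_or] at h
      exact hc.2 ⟨x, y, z, hxy, hxz, hyz, h.1, h.2.1, h.2.2⟩
    have hv : valid c Finset.univ (fun i : Fin k => if (i : ℕ) < r then 3 else 1) := by
      intro i
      have hi : ¬ HasMonoCopy (mixKH k r H i).2 c i := fun h => hno ⟨i, h⟩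
      by_cases hir : (i : ℕ) < r
      · rw [show mixKH k r H i = ⟨Fin 5, H⟩ from if_pos hir] at hi
        simp only [hir, if_true]
        exact copyH hc.1 hH hi
      · rw [show mixKH k r H i = ⟨Fin 3, GK3⟩ from if_neg hir] at hi
        simp only [hir, if_false]
        exact copyT hc.1 hi
    have := upper hc.1 hG _ Finset.univ rfl _ hv
    rw [MM_t hr, hb, gg_odd, show hh r = 4 * 17 ^ a by rw [ha, hh_odd], Finset.card_univ,
      Fintype.card_fin] at this
    have e : 2 * 5 ^ b * (4 * 17 ^ a) = 8 * 5 ^ b * 17 ^ a := by ring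
    omega
  refine le_antisymm (Nat.sInf_le mem) (le_csInf ⟨_, mem⟩ ?_)
  intro n hn
  by_contra hlt
  obtain ⟨V, _, c, hV, cs, -, cg, ct, ck⟩ := LB_all (k := k) (r := r) a b (by omega) (by omega)
  obtain ⟨g⟩ : Nonempty (Fin n ↪ V) :=
    Function.Embedding.nonempty_of_card_le (by rw [Fintype.card_fin, hV]; omega)
  obtain ⟨i, hi⟩ := hn (fun x y => c (g x) (g y)) ⟨fun x y => cs _ _, by
    rintro ⟨x, y, z, hxy, hxz, hyz, h1, h2, h3⟩
    have := cg (g x) (g y) (g z) (fun e => hxy (g.injective e)) (fun e => hxz (g.injective e))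
      (fun e => hyz (g.injective e))
    tauto⟩
  by_cases hir : (i : ℕ) < r
  · rw [show mixKH k r H i = ⟨Fin 5, H⟩ from if_pos hir] at hi
    exact noH g.injective hH (ck i hir) hi
  · rw [show mixKH k r H i = ⟨Fin 3, GK3⟩ from if_neg hir] at hi
    exact noT g.injective (ct i (by omega)) hi
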